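/- arXiv:2412.17233 — 2 statements merged into one kernel-verified Lean document; each statement's English description precedes it below -/
import Mathlib

section
/- Let A be an n×n real skew-symmetric matrix. Then A lies in the Euclidean closure of S_n^{>0} in the space of n×n real matrices if and only if there exists ε₀ > 0 such that for all ε with 0 < ε < ε₀, writing [Y₁(ε) | Y₂(ε)] := [Id_n | A]·Z(ε) (an n×2n matrix split into two n×n blocks), the matrix Y₁(ε) is invertible and Y₁(ε)⁻¹·Y₂(ε) ∈ S_n^{>0}. -/
noncomputable section

open Matrix

/-- `N = n(n-1)/2`, the number of parameters. -/
def Npar (n : ℕ) : ℕ := n * (n - 1) / 2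

/-- The decreasing run `a, a-1, …, b` (empty if `b > a`). -/
def decRun (a b : ℕ) : List ℕ := (List.range' b (a + 1 - b)).reverse

/-- The index sequence `(i_1, …, i_N)`: for `m = 1, …, ⌊n/2⌋` (here `m` is 0-based, so
`m+1` is the 1-based block index), concatenate `n`, the run `n-2, …, 2(m+1)-1`, and the
run `n-1, …, 2(m+1)`. -/
def wordD (n : ℕ) : List ℕ :=
  ((List.range (n / 2)).map (fun m =>
    n :: (decRun (n - 2) (2 * m + 1) ++ decRun (n - 1) (2 * m + 2)))).flatten

/-- The matrix `x_i(t)` (index `i` is 1-based, matrix positions are 1-based in the paper,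
0-based here). -/
def xMat (n : ℕ) (i : ℕ) (t : ℝ) : Matrix (Fin (2 * n)) (Fin (2 * n)) ℝ :=
  Matrix.of fun p q =>
    (if (p : ℕ) = (q : ℕ) then 1 else 0) +
    (if i < n then
        (if (p : ℕ) + 1 = i ∧ (q : ℕ) + 1 = i + 1 then t else 0)
      + (if (p : ℕ) + 1 = n + i + 1 ∧ (q : ℕ) + 1 = n + i then -t else 0)
     else
        (if (p : ℕ) + 1 = n - 1 ∧ (q : ℕ) + 1 = 2 * n then t else 0)
      + (if (p : ℕ) + 1 = n ∧ (q : ℕ) + 1 = 2 * n - 1 then -t else 0))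

/-- The product `x_{i_1}(t_1) ⋯ x_{i_N}(t_N)`; the parameter `t l` plays the role of
`t_{l+1}`. -/
def prodX (n : ℕ) (t : ℕ → ℝ) : Matrix (Fin (2 * n)) (Fin (2 * n)) ℝ :=
  ((List.range (Npar n)).map (fun l => xMat n ((wordD n).getD l 0) (t l))).prod

/-- The first block `X₁(t)` of the first `n` rows of the product. -/
def X1 (n : ℕ) (t : ℕ → ℝ) : Matrix (Fin n) (Fin n) ℝ :=
  Matrix.of fun p q =>
    prodX n t ⟨(p : ℕ), by have := p.isLt; omega⟩ ⟨(q : ℕ), by have := q.isLt; omega⟩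

/-- The second block `X₂(t)` of the first `n` rows of the product. -/
def X2 (n : ℕ) (t : ℕ → ℝ) : Matrix (Fin n) (Fin n) ℝ :=
  Matrix.of fun p q =>
    prodX n t ⟨(p : ℕ), by have := p.isLt; omega⟩ ⟨n + (q : ℕ), by have := q.isLt; omega⟩

/-- The skew-symmetric matrix `A(t) = X₁(t)⁻¹ · X₂(t)`. -/
def Amat (n : ℕ) (t : ℕ → ℝ) : Matrix (Fin n) (Fin n) ℝ := (X1 n t)⁻¹ * X2 n t

/-- The set `S_n^{>0}` of totally positive skew-symmetric matrices. -/
def Spos (n : ℕ) : Set (Matrix (Fin n) (Fin n) ℝ) :=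
  { A | ∃ t : ℕ → ℝ, (∀ i < Npar n, 0 < t i) ∧ A = Amat n t }

/-- The signed minor `M_{j,k}(A)`: `(-1)^{jk}` times the determinant of the submatrix of `A`
with (1-based) rows `{1,…,n-k-1} ∪ {n-k+j,…,n}` and columns `{1,…,n-j}`. -/
def Mminor (n j k : ℕ) (A : Matrix (Fin n) (Fin n) ℝ) : ℝ :=
  (-1 : ℝ) ^ (j * k) *
    Matrix.det (Matrix.of fun (p q : Fin (n - j)) =>
      A (if (p : ℕ) < n - k - 1
          then ⟨(p : ℕ), by have := p.isLt; omega⟩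
          else ⟨(p : ℕ) + j, by have := p.isLt; omega⟩)
        ⟨(q : ℕ), by have := q.isLt; omega⟩)

/-- The Pfaffian of an `m × m` matrix (intended for `m` even):
`Pf(B) = (1/(2^{m/2} (m/2)!)) Σ_σ sgn(σ) Π_i B_{σ(2i-1), σ(2i)}`. -/
def Pfaff {m : ℕ} (B : Matrix (Fin m) (Fin m) ℝ) : ℝ :=
  (1 / ((2 : ℝ) ^ (m / 2) * (Nat.factorial (m / 2) : ℝ))) *
    ∑ σ : Equiv.Perm (Fin m), ((Equiv.Perm.sign σ : ℤ) : ℝ) *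
      ∏ i : Fin (m / 2),
        B (σ ⟨2 * (i : ℕ), by have := i.isLt; omega⟩)
          (σ ⟨2 * (i : ℕ) + 1, by have := i.isLt; omega⟩)

/-- `Pf_I(A)`: the Pfaffian of the submatrix of `A` with rows and columns indexed by `I`
in increasing order. -/
def PfI {n : ℕ} (A : Matrix (Fin n) (Fin n) ℝ) (I : Finset (Fin n)) : ℝ :=
  Pfaff (Matrix.of fun (p q : Fin I.card) =>
    A ((I.orderIsoOfFin rfl p : Fin n)) ((I.orderIsoOfFin rfl q : Fin n)))

/-- `sgn(I,[n]) = (-1)^{(Σ_{i∈I} i) - |I|(|I|+1)/2}` (the elements of `I` are 1-based, so a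
0-based element `i` contributes `i+1`; the natural subtraction agrees with the integer one
since the sum of `|I|` distinct positive integers is at least `|I|(|I|+1)/2`). -/
def sgnSet {n : ℕ} (I : Finset (Fin n)) : ℝ :=
  (-1 : ℝ) ^ ((∑ i ∈ I, ((i : ℕ) + 1)) - I.card * (I.card + 1) / 2)

/-- The block matrix `[Id_n | A]`. -/
def IdA {n : ℕ} (A : Matrix (Fin n) (Fin n) ℝ) : Matrix (Fin n) (Fin (2 * n)) ℝ :=
  Matrix.of fun p q =>
    if h : (q : ℕ) < n then (if (p : ℕ) = (q : ℕ) then 1 else 0)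
    else A p ⟨(q : ℕ) - n, by have := q.isLt; omega⟩

/-- The full word `(j_1, …, j_{2N})`: `1, 2,1, 3,2,1, …, n-1,…,1` followed by `(i_1,…,i_N)`. -/
def wordFull (n : ℕ) : List ℕ :=
  (((List.range n).map (fun r => decRun r 1)).flatten) ++ wordD n

/-- `z(ε) = x_{j_1}(ε) ⋯ x_{j_{2N}}(ε)`. -/
def zeps (n : ℕ) (ε : ℝ) : Matrix (Fin (2 * n)) (Fin (2 * n)) ℝ :=
  ((wordFull n).map (fun i => xMat n i ε)).prod

/-- `Z(ε) = z(ε)ᵀ · z(ε)`. -/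
def Zeps (n : ℕ) (ε : ℝ) : Matrix (Fin (2 * n)) (Fin (2 * n)) ℝ :=
  (zeps n ε)ᵀ * zeps n ε

/-- First block `Y₁(ε)` of `[Id_n | A] · Z(ε)`. -/
def Y1 {n : ℕ} (A : Matrix (Fin n) (Fin n) ℝ) (ε : ℝ) : Matrix (Fin n) (Fin n) ℝ :=
  Matrix.of fun p q => (IdA A * Zeps n ε) p ⟨(q : ℕ), by have := q.isLt; omega⟩

/-- Second block `Y₂(ε)` of `[Id_n | A] · Z(ε)`. -/
def Y2 {n : ℕ} (A : Matrix (Fin n) (Fin n) ℝ) (ε : ℝ) : Matrix (Fin n) (Fin n) ℝ :=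
  Matrix.of fun p q => (IdA A * Zeps n ε) p ⟨n + (q : ℕ), by have := q.isLt; omega⟩

/-- The simple generators `s_i` of the Weyl group `W` of `SO(2n)`, as permutations of
`{1,…,2n}` (0-based here): for `1 ≤ i ≤ n-1`, `s_i = (i,i+1)(n+i,n+i+1)`; for `i = n`,
`s_n = (n,2n-1)(n-1,2n)`. -/
def sGen (n : ℕ) (i : ℕ) : Equiv.Perm (Fin (2 * n)) :=
  if h : 1 ≤ i ∧ i ≤ n - 1 ∧ 2 ≤ n then
    Equiv.swap ⟨i - 1, by omega⟩ ⟨i, by omega⟩ *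
      Equiv.swap ⟨n + i - 1, by omega⟩ ⟨n + i, by omega⟩
  else if h2 : i = n ∧ 2 ≤ n then
    Equiv.swap ⟨n - 1, by omega⟩ ⟨2 * n - 2, by omega⟩ *
      Equiv.swap ⟨n - 2, by omega⟩ ⟨2 * n - 1, by omega⟩
  else 1

/-- Membership in the Weyl group `W`: `σ(n+i) ≡ n + σ(i) (mod 2n)` for all `1 ≤ i ≤ n`,
and the number of `i ∈ {1,…,n}` with `σ(i) > n` is even. (All positions are 0-based; a
0-based value `v` corresponds to the 1-based value `v+1`.) -/
def inW (n : ℕ) (σ : Equiv.Perm (Fin (2 * n))) : Prop :=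
  (∀ i : Fin n,
    ((σ ⟨n + (i : ℕ), by have := i.isLt; omega⟩ : Fin (2 * n)) : ℕ)
      ≡ n + ((σ ⟨(i : ℕ), by have := i.isLt; omega⟩ : Fin (2 * n)) : ℕ) [MOD 2 * n]) ∧
  Even (Finset.univ.filter (fun i : Fin n =>
    n ≤ ((σ ⟨(i : ℕ), by have := i.isLt; omega⟩ : Fin (2 * n)) : ℕ))).card

/-- `I_w = {i ∈ {1,…,n} : w(i) > n}`, as a finset of `Fin n` (0-based). -/
def Iset (n : ℕ) (σ : Equiv.Perm (Fin (2 * n))) : Finset (Fin n) :=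
  Finset.univ.filter (fun i : Fin n =>
    n ≤ ((σ ⟨(i : ℕ), by have := i.isLt; omega⟩ : Fin (2 * n)) : ℕ))

/-- The parabolic subgroup `W_{[n-1]}` generated by `s_1, …, s_{n-1}`. -/
def Wpar (n : ℕ) : Subgroup (Equiv.Perm (Fin (2 * n))) :=
  Subgroup.closure { σ | ∃ i, 1 ≤ i ∧ i ≤ n - 1 ∧ σ = sGen n i }

/-- The standard basis vector `e_i` of `ℝ^{2n}` (with `i : Fin n` 0-based, sitting in
position `i` of the first block). -/
def evec (n : ℕ) (i : Fin n) : Fin (2 * n) → ℝ :=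
  Pi.single ⟨(i : ℕ), by have := i.isLt; omega⟩ 1

/-- The standard basis vector `f_j` of `ℝ^{2n}` (position `n + j`). -/
def fvec (n : ℕ) (j : Fin n) : Fin (2 * n) → ℝ :=
  Pi.single ⟨n + (j : ℕ), by have := j.isLt; omega⟩ 1

/-- `f = ι(f_1)⋯ι(f_n)` in the Clifford algebra. -/
def fElt {n : ℕ} (Q : QuadraticForm ℝ (Fin (2 * n) → ℝ)) : CliffordAlgebra Q :=
  (List.ofFn (fun j : Fin n => CliffordAlgebra.ι Q (fvec n j))).prod

/-- `e_S = ι(e_{l_1})⋯ι(e_{l_s})` where `l_1 < ⋯ < l_s` enumerates `S`. -/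
def eProd {n : ℕ} (Q : QuadraticForm ℝ (Fin (2 * n) → ℝ)) (S : Finset (Fin n)) :
    CliffordAlgebra Q :=
  ((S.sort (· ≤ ·)).map (fun l => CliffordAlgebra.ι Q (evec n l))).prod

/-- `h = Π_{i=1}^n ι(e_i + Σ_j A_{ij} f_j)` (product in increasing order of `i`). -/
def hElt {n : ℕ} (Q : QuadraticForm ℝ (Fin (2 * n) → ℝ)) (A : Matrix (Fin n) (Fin n) ℝ) :
    CliffordAlgebra Q :=
  (List.ofFn (fun i : Fin n =>
    CliffordAlgebra.ι Q (evec n i + ∑ j : Fin n, A i j • fvec n j))).prod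

/-- The sorted list of the (1-based) elements of `S ⊆ {1,…,n}`. -/
def valsOf {n : ℕ} (S : Finset (Fin n)) : List ℕ :=
  (S.sort (· ≤ ·)).map (fun i => (i : ℕ) + 1)

/-- The word `w_1 w_2 ⋯ w_r` where
`w_m = s_n (s_{n-2}⋯s_{i_{2m-1}}) (s_{n-1}⋯s_{i_{2m}})` and `vals` lists `i_1 < i_2 < ⋯`
(1-based); `m` is 0-based here. -/
def uWord (n r : ℕ) (vals : List ℕ) : List ℕ :=
  ((List.range r).map (fun m =>
    n :: (decRun (n - 2) (vals.getD (2 * m) 0) ++ decRun (n - 1) (vals.getD (2 * m + 1) 0)))).flatten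

/-- The permutation `u = w_1 w_2 ⋯ w_r`. -/
def uPerm (n r : ℕ) (vals : List ℕ) : Equiv.Perm (Fin (2 * n)) :=
  ((uWord n r vals).map (sGen n)).prod

/-- `L = r + Σ_{m=1}^{r} ((n-1-i_{2m-1}) + (n-i_{2m}))`. -/
def Lval (n r : ℕ) (vals : List ℕ) : ℕ :=
  r + ∑ m ∈ Finset.range r, ((n - 1 - vals.getD (2 * m) 0) + (n - vals.getD (2 * m + 1) 0))


structure Hecke {M : Type*} [Monoid M] (n : ℕ) (p : ℕ → M) : Prop where
  idem : ∀ i, 1 ≤ i → i ≤ n → p i * p i = p i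
  comm : ∀ i j, 1 ≤ i → i + 2 ≤ j → j < n → p i * p j = p j * p i
  commn : ∀ i, 1 ≤ i → i < n → i + 2 ≠ n → p i * p n = p n * p i
  braid : ∀ i, 1 ≤ i → i + 1 < n → p i * p (i + 1) * p i = p (i + 1) * p i * p (i + 1)
  braidn : ∀ i, 1 ≤ i → i + 2 = n → p i * p n * p i = p n * p i * p n

section heckeSec
variable {M : Type*} [Monoid M]

def RR (p : ℕ → M) (a b : ℕ) : M := ((decRun a b).map p).prod

lemma RR_empty (p : ℕ → M) {a b : ℕ} (h : a < b) : RR p a b = 1 := by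
  have : a + 1 - b = 0 := by omega
  simp [RR, decRun, this]

lemma RR_top (p : ℕ → M) {a b : ℕ} (h : b ≤ a + 1) :
    RR p (a + 1) b = p (a + 1) * RR p a b := by
  have h1 : a + 1 + 1 - b = (a + 1 - b) + 1 := by omega
  have h2 : b + (a + 1 - b) = a + 1 := by omega
  simp [RR, decRun, h1, List.range'_concat, h2]

lemma RR_bot (p : ℕ → M) {a b : ℕ} (h : b ≤ a) :
    RR p a b = RR p a (b + 1) * p b := by
  have h1 : a + 1 - b = (a + 1 - (b + 1)) + 1 := by omega
  simp only [RR, decRun, h1, List.range'_succ]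
  simp

def BB (n : ℕ) (p : ℕ → M) (c : ℕ) : M := p n * (RR p (n - 2) c * RR p (n - 1) (c + 1))

def DD (n : ℕ) (p : ℕ → M) (r : ℕ) : M := ((List.range r).map (fun m => BB n p (2 * m + 1))).prod

def AW (p : ℕ → M) (s : ℕ) : M := ((List.range s).map (fun r => RR p r 1)).prod

lemma DD_succ (n : ℕ) (p : ℕ → M) (r : ℕ) : DD n p (r + 1) = DD n p r * BB n p (2 * r + 1) := by
  simp [DD, List.range_succ]

lemma AW_succ (p : ℕ → M) (r : ℕ) : AW p (r + 1) = AW p r * RR p r 1 := by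
  simp [AW, List.range_succ]

lemma RR_comm (p : ℕ → M) (x : M) (a b : ℕ) (h : ∀ k, b ≤ k → k ≤ a → p k * x = x * p k) :
    RR p a b * x = x * RR p a b := by
  have : Commute x (RR p a b) := by
    apply Commute.list_prod_right
    intro y hy
    simp only [decRun, List.map_reverse, List.mem_reverse, List.mem_map, List.mem_range'_1] at hy
    obtain ⟨k, hk, rfl⟩ := hy
    exact (h k hk.1 (by omega)).symm
  exact this.symm

variable {n : ℕ} {p : ℕ → M}

lemma RR_shift (H : Hecke n p) : ∀ a b k, 1 ≤ b → b + 1 ≤ k → k ≤ a → a < n →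
    RR p a b * p k = p (k - 1) * RR p a b := by
  intro a
  induction a with
  | zero => intros; omega
  | succ a ih =>
    intro b k hb hk hka han
    rw [RR_top p (by omega)]
    rcases Nat.lt_or_ge k (a + 1) with h | h
    · rw [mul_assoc, ih b k hb hk (by omega) (by omega), ← mul_assoc, ← mul_assoc,
        H.comm (k - 1) (a + 1) (by omega) (by omega) han]
    · obtain rfl : k = a + 1 := by omega
      obtain ⟨a, rfl⟩ : ∃ a', a = a' + 1 := ⟨a - 1, by omega⟩
      rw [RR_top p (by omega)]
      have h1 : RR p a b * p (a + 1 + 1) = p (a + 1 + 1) * RR p a b :=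
        RR_comm p _ _ _ fun k hk hk' => H.comm _ _ (by omega) (by omega) (by omega)
      rw [mul_assoc, mul_assoc, h1, ← mul_assoc, ← mul_assoc, ← H.braid (a + 1) (by omega) (by omega)]
      simp [mul_assoc]

lemma RR_absorb (H : Hecke n p) {a b : ℕ} (hb : 1 ≤ b) (h : b ≤ a) (ha : a < n) :
    RR p a b * p b = RR p a b := by
  rw [RR_bot p h, mul_assoc, H.idem b hb (by omega)]

lemma RR_dbl' (H : Hecke n p) (a c : ℕ) (hc : 1 ≤ c) (ha : a + 1 < n) : ∀ m, m ≤ a →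
    RR p (a + 1) c * RR p (m + 1) (c + 1) = RR p m c * RR p (a + 1) c := by
  intro m
  induction m with
  | zero => intro _; rw [RR_empty p (show 0 + 1 < c + 1 by omega), RR_empty p (show 0 < c by omega)]; simp
  | succ m ih =>
    intro hm
    rcases Nat.lt_or_ge (m + 1) c with h | h
    · rw [RR_empty p (show m + 1 + 1 < c + 1 by omega), RR_empty p h]; simp
    · rw [RR_top p (a := m + 1) (by omega), ← mul_assoc, RR_shift H _ _ _ hc (by omega) (by omega) ha,
        mul_assoc, ih (by omega), RR_top p (a := m) (by omega), mul_assoc]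
      rfl

lemma RR_dbl (H : Hecke n p) (a c : ℕ) (hc : 1 ≤ c) (ha : a + 1 < n) :
    RR p (a + 1) c * RR p (a + 1) (c + 1) = RR p a c * RR p (a + 1) c :=
  RR_dbl' H a c hc ha a le_rfl

lemma BB_shift (H : Hecke n p) {c k : ℕ} (hc : 1 ≤ c) (h1 : c + 2 ≤ k) (h2 : k < n) :
    BB n p c * p k = p (k - 2) * BB n p c := by
  unfold BB
  rw [mul_assoc, mul_assoc, RR_shift H (n - 1) _ k (by omega) (by omega) (by omega) (by omega),
    ← mul_assoc (RR p (n - 2) c), RR_shift H (n - 2) _ (k - 1) (by omega) (by omega) (by omega) (by omega),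
    ← mul_assoc (p (k - 2)), H.commn (k - 2) (by omega) (by omega) (by omega)]
  simp [mul_assoc, Nat.sub_sub]

lemma BB_comm (H : Hecke n p) {c k : ℕ} (hk : 1 ≤ k) (h1 : k + 2 ≤ c) (h2 : c < n) :
    BB n p c * p k = p k * BB n p c := by
  unfold BB
  have e1 : RR p (n - 1) (c + 1) * p k = p k * RR p (n - 1) (c + 1) :=
    RR_comm p _ _ _ fun j hj hj' => (H.comm _ _ (by omega) (by omega) (by omega)).symm
  have e2 : RR p (n - 2) c * p k = p k * RR p (n - 2) c :=
    RR_comm p _ _ _ fun j hj hj' => (H.comm _ _ (by omega) (by omega) (by omega)).symm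
  rw [mul_assoc, mul_assoc, e1, ← mul_assoc (RR p (n - 2) c), e2, ← mul_assoc (p k),
    H.commn k (by omega) (by omega) (by omega)]
  simp [mul_assoc]

lemma BB_self (H : Hecke n p) (hn : 2 ≤ n) {c : ℕ} (hc : 1 ≤ c) (h2 : c < n) :
    BB n p c * p c = p (n - 1) * BB n p c := by
  obtain ⟨q, rfl⟩ : ∃ q, n = q + 2 := ⟨n - 2, by omega⟩
  have e := RR_dbl H q c hc (by omega)
  simp only [BB, Nat.add_sub_cancel, show q + 2 - 1 = q + 1 by omega]
  rw [mul_assoc, mul_assoc, ← RR_bot p (show c ≤ q + 1 by omega), ← e, RR_top p (by omega), mul_assoc,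
    ← mul_assoc (p (q + 2)), ← H.commn (q + 1) (by omega) (by omega) (by omega), mul_assoc]

lemma BB_BB (H : Hecke n p) {c : ℕ} (hc : 1 ≤ c) (h2 : c + 2 < n) :
    BB n p c * BB n p (c + 2) * p (c + 1) = p (n - 2) * (BB n p c * BB n p (c + 2)) := by
  obtain ⟨q, rfl⟩ : ∃ q, n = q + 3 := ⟨n - 3, by omega⟩
  simp only [BB, show q + 3 - 2 = q + 1 by omega, show q + 3 - 1 = q + 2 by omega]
  have e1 : RR p (q + 2) (c + 2 + 1) * p (c + 1) = p (c + 1) * RR p (q + 2) (c + 2 + 1) :=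
    RR_comm p _ _ _ fun j hj hj' => (H.comm _ _ (by omega) (by omega) (by omega)).symm
  have e2 : ∀ b, 1 ≤ b → RR p q b * p (q + 3) = p (q + 3) * RR p q b := fun b hb =>
    RR_comm p _ _ _ fun j hj hj' => (H.commn _ (by omega) (by omega) (by omega))
  have e3 : RR p (q + 1) (c + 2) * p (c + 1) = RR p (q + 1) (c + 1) :=
    (RR_bot p (by omega)).symm
  have e4 := RR_dbl H q (c + 1) (by omega) (by omega)
  have e5 : p (q + 1) * p (q + 3) * p (q + 1) = p (q + 3) * p (q + 1) * p (q + 3) :=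
    H.braidn (q + 1) (by omega) (by omega)
  have e6 : p (q + 2) * p (q + 3) = p (q + 3) * p (q + 2) :=
    H.commn (q + 2) (by omega) (by omega) (by omega)
  have key : p (q + 3) * (RR p (q + 1) c * RR p (q + 2) (c + 1)) * (p (q + 3) * RR p (q + 1) (c + 1))
      = p (q + 1) * (p (q + 3) * (RR p (q + 1) c * RR p (q + 2) (c + 1)) *
        (p (q + 3) * RR p (q + 1) (c + 2))) := by
    rw [RR_top p (a := q + 1) (b := c + 1) (by omega), RR_top p (a := q) (b := c) (by omega)]
    have hR : RR p (q + 1) (c + 1) * (p (q + 3) * RR p (q + 1) (c + 1)) =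
        p (q + 3) * p (q + 1) * p (q + 3) * RR p q (c + 1) * RR p (q + 1) (c + 2) := by
      calc _ = p (q + 1) * (RR p q (c + 1) * p (q + 3)) * RR p (q + 1) (c + 1) := by
            nth_rewrite 1 [RR_top p (a := q) (b := c + 1) (by omega)]
            simp only [mul_assoc]
        _ = p (q + 1) * p (q + 3) * (RR p q (c + 1) * RR p (q + 1) (c + 1)) := by
          rw [e2 _ (by omega)]; simp [mul_assoc]
        _ = (p (q + 1) * p (q + 3) * p (q + 1)) * RR p q (c + 1) * RR p (q + 1) (c + 2) := by
          rw [← e4, RR_top p (a := q) (b := c + 1) (by omega)]; simp [mul_assoc]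
        _ = _ := by rw [e5]
    calc _ = p (q + 3) * p (q + 1) * RR p q c * p (q + 2) *
          (RR p (q + 1) (c + 1) * (p (q + 3) * RR p (q + 1) (c + 1))) := by simp [mul_assoc]
      _ = p (q + 3) * p (q + 1) * RR p q c * (p (q + 2) * p (q + 3)) * p (q + 1) *
          (p (q + 3) * RR p q (c + 1)) * RR p (q + 1) (c + 2) := by rw [hR]; simp [mul_assoc]
      _ = p (q + 3) * p (q + 1) * (RR p q c * p (q + 3)) * p (q + 2) * p (q + 1) *
          (RR p q (c + 1) * p (q + 3)) * RR p (q + 1) (c + 2) := by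
          rw [e6, e2 (c + 1) (by omega)]; simp [mul_assoc]
      _ = (p (q + 3) * p (q + 1) * p (q + 3)) * RR p q c * p (q + 2) * (p (q + 1) *
          RR p q (c + 1)) * p (q + 3) * RR p (q + 1) (c + 2) := by
          rw [e2 c hc]; simp [mul_assoc]
      _ = _ := by rw [← e5, ← RR_top p (a := q) (b := c + 1) (by omega)]; simp [mul_assoc]
  calc _ = p (q + 3) * (RR p (q + 1) c * RR p (q + 2) (c + 1)) *
        (p (q + 3) * (RR p (q + 1) (c + 2) * (RR p (q + 2) (c + 2 + 1) * p (c + 1)))) := by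
        simp [mul_assoc]
    _ = p (q + 3) * (RR p (q + 1) c * RR p (q + 2) (c + 1)) *
        (p (q + 3) * (RR p (q + 1) (c + 2) * p (c + 1))) * RR p (q + 2) (c + 2 + 1) := by
        rw [e1]; simp [mul_assoc]
    _ = _ := by rw [e3, key]; simp [mul_assoc]

lemma DD_pass (H : Hecke n p) : ∀ r k, 2 * r + 1 ≤ k → k < n → DD n p r * p k = p (k - 2 * r) * DD n p r := by
  intro r
  induction r with
  | zero => intro k _ _; simp [DD]
  | succ r ih =>
    intro k h1 h2
    rw [DD_succ, mul_assoc, BB_shift H (by omega) (by omega) h2, ← mul_assoc, ih _ (by omega) (by omega),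
      mul_assoc]
    congr 2; omega

lemma DD_ext (H : Hecke n p) (x : M) (r k : ℕ) (hk : 1 ≤ k) (hr : k + 2 ≤ 2 * r + 1)
    (h : DD n p r * p k = x * DD n p r) : ∀ s, r ≤ s → 2 * s ≤ n → DD n p s * p k = x * DD n p s := by
  intro s hs
  induction s, hs using Nat.le_induction with
  | base => intro _; exact h
  | succ s hs ih =>
    intro h2
    rw [DD_succ, mul_assoc, BB_comm H hk (by omega) (by omega), ← mul_assoc, ih (by omega), mul_assoc]

lemma DD_all (H : Hecke n p) (hn : 2 ≤ n) (i : ℕ) (h1 : 1 ≤ i) (h2 : i ≤ n) :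
    DD n p (n / 2) * p i = DD n p (n / 2) ∨
    ∃ j, 1 ≤ j ∧ j < n ∧ DD n p (n / 2) * p i = p j * DD n p (n / 2) := by
  rcases Nat.lt_or_ge i n with hi | hi
  · rcases Nat.even_or_odd' i with ⟨r, hr | hr⟩
    · obtain ⟨r, rfl⟩ : ∃ r', r = r' + 1 := ⟨r - 1, by omega⟩
      rcases Nat.lt_or_ge (2 * r + 3) n with h | h
      · right
        refine ⟨n - 2 - 2 * r, by omega, by omega, ?_⟩
        refine DD_ext H _ (r + 2) i h1 (by omega) ?_ _ (by omega) (by omega)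
        have e := BB_BB H (c := 2 * r + 1) (by omega) (by omega)
        rw [DD_succ, DD_succ, hr, mul_assoc, mul_assoc, ← mul_assoc (BB n p _),
          show 2 * (r + 1) + 1 = 2 * r + 1 + 2 by ring, show 2 * (r + 1) = 2 * r + 1 + 1 by ring, e,
          ← mul_assoc, DD_pass H _ _ (by omega) (by omega)]
        simp [mul_assoc]
      · left
        have hnr : n = 2 * r + 3 := by omega
        rw [show n / 2 = r + 1 by omega, DD_succ, mul_assoc]
        congr 1
        rw [BB, mul_assoc, mul_assoc, show 2 * r + 1 + 1 = i by omega, RR_absorb H h1 (by omega) (by omega)]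
    · right
      refine ⟨n - 1 - 2 * r, by omega, by omega, ?_⟩
      refine DD_ext H _ (r + 1) i h1 (by omega) ?_ _ (by omega) (by omega)
      rw [DD_succ, hr, mul_assoc, BB_self H hn (by omega) (by omega), ← mul_assoc,
        DD_pass H _ _ (by omega) (by omega), mul_assoc]
  · obtain rfl : i = n := by omega
    rcases Nat.even_or_odd' i with ⟨r, hr | hr⟩
    · left
      obtain ⟨r, rfl⟩ : ∃ r', r = r' + 1 := ⟨r - 1, by omega⟩
      rw [show i / 2 = r + 1 by omega, DD_succ, mul_assoc]
      congr 1
      rw [BB, RR_empty p (by omega), RR_empty p (by omega)]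
      simp [H.idem i h1 h2]
    · right
      obtain ⟨r, rfl⟩ : ∃ r', r = r' + 1 := ⟨r - 1, by omega⟩
      refine ⟨1, le_rfl, by omega, ?_⟩
      rw [show i / 2 = r + 1 by omega, DD_succ, mul_assoc]
      have e : BB i p (2 * r + 1) * p i = p (2 * r + 1) * BB i p (2 * r + 1) := by
        have := H.braidn (2 * r + 1) (by omega) (by omega)
        have c := H.commn (2 * r + 2) (by omega) (by omega) (by omega)
        rw [BB, show i - 2 = 2 * r + 1 by omega, show i - 1 = 2 * r + 1 + 1 by omega,
          RR_top p (by omega), RR_top p (by omega), RR_empty p (by omega), RR_empty p (by omega)]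
        calc _ = p i * p (2 * r + 1) * (p (2 * r + 2) * p i) := by simp [mul_assoc]
          _ = p i * p (2 * r + 1) * p i * p (2 * r + 2) := by rw [c]; simp [mul_assoc]
          _ = _ := by rw [← this]; simp [mul_assoc]
      rw [e, ← mul_assoc, DD_pass H _ _ (by omega) (by omega), mul_assoc]
      congr 2; omega

lemma AW_absorb (H : Hecke n p) : ∀ s j, 1 ≤ j → j < s → s ≤ n → AW p s * p j = AW p s := by
  intro s
  induction s with
  | zero => intros; omega
  | succ s ih =>
    intro j h1 h2 h3
    rw [AW_succ, mul_assoc]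
    rcases Nat.lt_or_ge 1 j with h | h
    · rw [RR_shift H _ _ _ le_rfl (by omega) (by omega) (by omega), ← mul_assoc,
        ih _ (by omega) (by omega) (by omega)]
    · obtain rfl : j = 1 := by omega
      rw [RR_absorb H le_rfl (by omega) (by omega)]

lemma flat_prod (p : ℕ → M) (L : List (List ℕ)) :
    (L.flatten.map p).prod = (L.map (fun l => (l.map p).prod)).prod := by
  induction L with
  | nil => simp
  | cons a L ih => rw [List.flatten_cons, List.map_append, List.prod_append, ih, List.map_cons, List.prod_cons]

lemma wordFull_prod (n : ℕ) (p : ℕ → M) :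
    ((wordFull n).map p).prod = AW p n * DD n p (n / 2) := by
  rw [wordFull, List.map_append, List.prod_append, wordD, flat_prod, flat_prod]
  simp [AW, DD, RR, BB, Function.comp_def]

lemma full_right (H : Hecke n p) (hn : 2 ≤ n) (i : ℕ) (h1 : 1 ≤ i) (h2 : i ≤ n) :
    ((wordFull n).map p).prod * p i = ((wordFull n).map p).prod := by
  rw [wordFull_prod, mul_assoc]
  rcases DD_all H hn i h1 h2 with h | ⟨j, hj1, hj2, h⟩
  · rw [h]
  · rw [h, ← mul_assoc, AW_absorb H n j hj1 hj2 le_rfl]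

lemma Hecke.op (H : Hecke n p) : Hecke n (fun i => MulOpposite.op (p i)) where
  idem i h1 h2 := by rw [← MulOpposite.op_mul, H.idem i h1 h2]
  comm i j h1 h2 h3 := by rw [← MulOpposite.op_mul, ← MulOpposite.op_mul, H.comm i j h1 h2 h3]
  commn i h1 h2 h3 := by rw [← MulOpposite.op_mul, ← MulOpposite.op_mul, H.commn i h1 h2 h3]
  braid i h1 h2 := by
    simp only [← MulOpposite.op_mul, ← mul_assoc]; rw [H.braid i h1 h2]
  braidn i h1 h2 := by
    simp only [← MulOpposite.op_mul, ← mul_assoc]; rw [H.braidn i h1 h2]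

lemma mem_wordD (n i : ℕ) (hn : 2 ≤ n) (h : i ∈ wordD n) : 1 ≤ i ∧ i ≤ n := by
  simp only [wordD, decRun, List.mem_flatten, List.mem_map, List.mem_range] at h
  obtain ⟨l, ⟨m, hm, rfl⟩, hi⟩ := h
  simp only [List.mem_cons, List.mem_append, List.mem_reverse, List.mem_range'_1] at hi
  omega

lemma mem_wordFull (n i : ℕ) (hn : 2 ≤ n) (h : i ∈ wordFull n) : 1 ≤ i ∧ i ≤ n := by
  rw [wordFull, List.mem_append] at h
  rcases h with h | h
  · simp only [decRun, List.mem_flatten, List.mem_map, List.mem_range] at h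
    obtain ⟨l, ⟨m, hm, rfl⟩, hi⟩ := h
    simp only [List.mem_reverse, List.mem_range'_1] at hi
    omega
  · exact mem_wordD n i hn h

lemma absorb_list (x : M) (l : List M) (h : ∀ y ∈ l, x * y = x) : x * l.prod = x := by
  induction l with
  | nil => simp
  | cons a l ih =>
    rw [List.prod_cons, ← mul_assoc, h a (by simp), ih fun y hy => h y (by simp [hy])]

lemma absorb_list_left (x : M) (l : List M) (h : ∀ y ∈ l, y * x = x) : l.prod * x = x := by
  induction l with
  | nil => simp
  | cons a l ih =>
    rw [List.prod_cons, mul_assoc, ih fun y hy => h y (by simp [hy]), h a (by simp)]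

lemma full_left (H : Hecke n p) (hn : 2 ≤ n) (i : ℕ) (h1 : 1 ≤ i) (h2 : i ≤ n) :
    p i * ((wordFull n).map p).prod = ((wordFull n).map p).prod := by
  set W := ((wordFull n).map p).prod with hW
  set V := (((wordFull n).map p).reverse).prod with hV
  have hl : ∀ j, 1 ≤ j → j ≤ n → p j * V = V := by
    intro j hj1 hj2
    have := full_right H.op hn j hj1 hj2
    apply_fun MulOpposite.unop at this
    rw [MulOpposite.unop_mul, MulOpposite.unop_list_prod] at this
    simpa [hV, List.map_map, Function.comp_def] using this
  have e1 : W * V = V := by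
    rw [hW]
    refine absorb_list_left _ _ fun y hy => ?_
    obtain ⟨k, hk, rfl⟩ := List.mem_map.1 hy
    have := mem_wordFull n k hn hk
    exact hl k this.1 this.2
  have e2 : W * V = W := by
    rw [hV]
    refine absorb_list _ _ fun y hy => ?_
    obtain ⟨k, hk, rfl⟩ := List.mem_map.1 (List.mem_reverse.1 hy)
    have := mem_wordFull n k hn hk
    exact full_right H hn k this.1 this.2
  rw [← e2, e1]
  exact hl i h1 h2

end heckeSec

section matSec

def EE (n a b : ℕ) : Matrix (Fin (2 * n)) (Fin (2 * n)) ℝ :=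
  Matrix.of fun p q => if (p : ℕ) = a ∧ (q : ℕ) = b then 1 else 0

lemma EE_mul (n a b c d : ℕ) :
    EE n a b * EE n c d = if b = c ∧ b < 2 * n then EE n a d else 0 := by
  ext p q
  rw [Matrix.mul_apply]
  split_ifs with h
  · obtain ⟨rfl, h⟩ := h
    rw [Finset.sum_eq_single ⟨b, h⟩]
    · simp [EE, ← ite_and, and_comm]
    · intro k _ hk
      have : (k : ℕ) ≠ b := fun e => hk (Fin.ext e)
      simp [EE, this]
    · simp
  · apply Finset.sum_eq_zero
    intro k _
    have : ¬ ((k : ℕ) = b ∧ (k : ℕ) = c) := by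
      rintro ⟨h1, h2⟩; exact h ⟨by omega, by omega⟩
    simp only [EE, Matrix.of_apply]
    split_ifs <;> simp
    tauto

lemma EE_T (n a b : ℕ) : (EE n a b)ᵀ = EE n b a := by
  ext p q; simp [EE, and_comm]

def NN (n i : ℕ) : Matrix (Fin (2 * n)) (Fin (2 * n)) ℝ :=
  if i < n then EE n (i - 1) i - EE n (n + i) (n + i - 1)
  else EE n (n - 2) (2 * n - 1) - EE n (n - 1) (2 * n - 2)

lemma NN_lt {n i : ℕ} (h : i < n) : NN n i = EE n (i - 1) i - EE n (n + i) (n + i - 1) := if_pos h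
lemma NN_n (n : ℕ) : NN n n = EE n (n - 2) (2 * n - 1) - EE n (n - 1) (2 * n - 2) :=
  if_neg (lt_irrefl n)

lemma xMat_eq {n i : ℕ} (hn : 2 ≤ n) (h1 : 1 ≤ i) (h2 : i ≤ n) (t : ℝ) :
    xMat n i t = 1 + t • NN n i := by
  ext p q
  simp only [xMat, NN, Matrix.of_apply, Matrix.add_apply, Matrix.smul_apply, Matrix.one_apply, Fin.ext_iff]
  congr 1
  split_ifs with hi <;>
  simp only [EE, Matrix.sub_apply, Matrix.of_apply] <;> split_ifs <;> first | omega | simp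

lemma EE_ne {n a b c d : ℕ} (h : b ≠ c) : EE n a b * EE n c d = 0 := by
  rw [EE_mul, if_neg (by tauto)]

lemma EE_eq {n a b d : ℕ} (h : b < 2 * n) : EE n a b * EE n b d = EE n a d := by
  rw [EE_mul, if_pos ⟨rfl, h⟩]

lemma NN_sq {n i : ℕ} (hn : 2 ≤ n) (h1 : 1 ≤ i) (h2 : i ≤ n) : NN n i * NN n i = 0 := by
  unfold NN
  split_ifs with hi <;>
  simp only [mul_sub, sub_mul] <;> simp (disch := omega) only [EE_ne] <;> simp

lemma NN_comm {n i j : ℕ} (hn : 2 ≤ n) (h1 : 1 ≤ i) (h2 : i + 2 ≤ j) (h3 : j < n) :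
    NN n i * NN n j = NN n j * NN n i := by
  rw [NN_lt h3, NN_lt (by omega)]
  simp only [mul_sub, sub_mul]; simp (disch := omega) only [EE_ne]

lemma NN_commn {n i : ℕ} (hn : 2 ≤ n) (h1 : 1 ≤ i) (h2 : i < n) (h3 : i + 2 ≠ n) :
    NN n i * NN n n = NN n n * NN n i := by
  rw [NN_lt h2, NN_n]
  simp only [mul_sub, sub_mul]
  by_cases hi : i = n - 1
  · subst hi
    rw [show n + (n - 1) - 1 = 2 * n - 2 by omega, show n + (n - 1) = 2 * n - 1 by omega,
      show n - 1 - 1 = n - 2 by omega]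
    simp (disch := omega) only [EE_ne, EE_eq]
  · simp (disch := omega) only [EE_ne]

lemma NN_up {n i : ℕ} (h1 : 1 ≤ i) (h2 : i + 1 < n) :
    NN n i * NN n (i + 1) = EE n (i - 1) (i + 1) := by
  rw [NN_lt h2, NN_lt (by omega), show i + 1 - 1 = i by omega]
  simp only [mul_sub, sub_mul]
  simp (disch := omega) only [EE_ne, EE_eq]
  simp

lemma NN_down {n i : ℕ} (h1 : 1 ≤ i) (h2 : i + 1 < n) :
    NN n (i + 1) * NN n i = EE n (n + i + 1) (n + i - 1) := by
  rw [NN_lt h2, NN_lt (by omega), show n + (i + 1) - 1 = n + i by omega]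
  simp only [mul_sub, sub_mul]
  simp (disch := omega) only [EE_ne, EE_eq]
  simp [add_assoc]

lemma NN_upn {n i : ℕ} (h1 : 1 ≤ i) (h2 : i + 2 = n) :
    NN n i * NN n n = EE n (i - 1) (2 * n - 1) := by
  rw [NN_n, NN_lt (by omega), show n - 2 = i by omega]
  simp only [mul_sub, sub_mul]
  simp (disch := omega) only [EE_ne, EE_eq]
  simp

lemma NN_downn {n i : ℕ} (h1 : 1 ≤ i) (h2 : i + 2 = n) :
    NN n n * NN n i = EE n (n - 1) (n + i - 1) := by
  rw [NN_n, NN_lt (by omega), show 2 * n - 2 = n + i by omega]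
  simp only [mul_sub, sub_mul]
  simp (disch := omega) only [EE_ne, EE_eq]
  simp

lemma NN_tri1 {n i : ℕ} (h1 : 1 ≤ i) (h2 : i + 1 < n) : NN n i * NN n (i + 1) * NN n i = 0 := by
  rw [NN_up h1 h2, NN_lt (by omega)]
  simp only [mul_sub]; simp (disch := omega) only [EE_ne]; simp
lemma NN_tri2 {n i : ℕ} (h1 : 1 ≤ i) (h2 : i + 1 < n) :
    NN n (i + 1) * NN n i * NN n (i + 1) = 0 := by
  rw [NN_down h1 h2, NN_lt (by omega)]
  simp only [mul_sub]; simp (disch := omega) only [EE_ne]; simp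
lemma NN_tri3 {n i : ℕ} (h1 : 1 ≤ i) (h2 : i + 2 = n) : NN n i * NN n n * NN n i = 0 := by
  rw [NN_upn h1 h2, NN_lt (by omega)]
  simp only [mul_sub]; simp (disch := omega) only [EE_ne]; simp
lemma NN_tri4 {n i : ℕ} (h1 : 1 ≤ i) (h2 : i + 2 = n) : NN n n * NN n i * NN n n = 0 := by
  rw [NN_downn h1 h2, NN_n]
  simp only [mul_sub]; simp (disch := omega) only [EE_ne]; simp

lemma NN_T_aux {n i : ℕ} (hn : 2 ≤ n) (h1 : 1 ≤ i) (h2 : i < n) :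
    NN n i * (NN n n)ᵀ = (NN n n)ᵀ * NN n i := by
  rw [NN_n, NN_lt h2]
  simp only [Matrix.transpose_sub, EE_T, mul_sub, sub_mul]
  by_cases hi : i = n - 1
  · subst hi
    rw [show n + (n - 1) - 1 = 2 * n - 2 by omega, show n + (n - 1) = 2 * n - 1 by omega,
      show n - 1 - 1 = n - 2 by omega]
    simp (disch := omega) only [EE_ne, EE_eq]
    simp
  · simp (disch := omega) only [EE_ne]

lemma NN_T {n i j : ℕ} (hn : 2 ≤ n) (h1 : 1 ≤ i) (h2 : i ≤ n) (h3 : 1 ≤ j) (h4 : j ≤ n) (h : i ≠ j) :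
    NN n i * (NN n j)ᵀ = (NN n j)ᵀ * NN n i := by
  rcases Nat.lt_or_ge i n with hi | hi
  · rcases Nat.lt_or_ge j n with hj | hj
    · rw [NN_lt hi, NN_lt hj]
      simp only [Matrix.transpose_sub, EE_T, mul_sub, sub_mul]
      simp (disch := omega) only [EE_ne]
    · obtain rfl : j = n := by omega
      exact NN_T_aux hn h1 hi
  · obtain rfl : i = n := by omega
    have := congrArg Matrix.transpose (NN_T_aux (i := j) hn h3 (by omega))
    simpa only [Matrix.transpose_mul, Matrix.transpose_transpose] using this

def tt (n : ℕ) (d : ℕ → ℝ) (k : ℕ) : ℝ := if k < n then d k else (d (k - n))⁻¹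

/-- torus element -/
def TT (n : ℕ) (d : ℕ → ℝ) : Matrix (Fin (2 * n)) (Fin (2 * n)) ℝ :=
  Matrix.diagonal fun p => tt n d p

def chi (n i : ℕ) (d : ℕ → ℝ) : ℝ :=
  if i < n then (d (i - 1))⁻¹ * d i else (d (n - 2))⁻¹ * (d (n - 1))⁻¹

lemma EE_TT (n a b : ℕ) (d : ℕ → ℝ) : EE n a b * TT n d = tt n d b • EE n a b := by
  ext p q
  simp only [TT, Matrix.mul_diagonal, EE, Matrix.of_apply, Matrix.smul_apply, smul_eq_mul]
  split_ifs with h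
  · rw [h.2]; ring
  · simp

lemma TT_EE (n a b : ℕ) (d : ℕ → ℝ) : TT n d * EE n a b = tt n d a • EE n a b := by
  ext p q
  simp only [TT, Matrix.diagonal_mul, EE, Matrix.of_apply, Matrix.smul_apply, smul_eq_mul]
  split_ifs with h
  · rw [h.1]
  · simp

lemma NN_TT {n i : ℕ} (hn : 2 ≤ n) (h1 : 1 ≤ i) (h2 : i ≤ n) (d : ℕ → ℝ) (hd : ∀ k, 0 < d k) :
    NN n i * TT n d = chi n i d • (TT n d * NN n i) := by
  have hd' := fun k => (hd k).ne'
  rcases Nat.lt_or_ge i n with hi | hi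
  · rw [NN_lt hi, chi, if_pos hi]
    simp only [sub_mul, mul_sub, EE_TT, TT_EE, smul_sub, smul_smul, tt]
    simp (disch := omega) only [if_pos, if_neg]
    rw [show n + i - 1 - n = i - 1 by omega, show n + i - n = i by omega]
    congr 2 <;> field_simp [hd']
  · obtain rfl : i = n := by omega
    rw [NN_n, chi, if_neg (by omega)]
    simp only [sub_mul, mul_sub, EE_TT, TT_EE, smul_sub, smul_smul, tt]
    simp (disch := omega) only [if_pos, if_neg]
    rw [show 2 * i - 1 - i = i - 1 by omega, show 2 * i - 2 - i = i - 2 by omega]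
    congr 2 <;> field_simp [hd']

def tor (n i : ℕ) (s : ℝ) : ℕ → ℝ := fun k =>
  if i < n then (if k = i - 1 then s else if k = i then s⁻¹ else 1)
  else (if k = n - 2 then s else if k = n - 1 then s else 1)

lemma EE_diag (n k : ℕ) : EE n k k = Matrix.diagonal fun p : Fin (2 * n) => if (p : ℕ) = k then 1 else 0 := by
  ext p q
  simp only [EE, Matrix.of_apply, Matrix.diagonal_apply, Fin.ext_iff]
  split_ifs <;> first | omega | rfl

lemma TT_tor {n i : ℕ} (hn : 2 ≤ n) (h1 : 1 ≤ i) (h2 : i ≤ n) (s : ℝ) (hs : 0 < s) :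
    TT n (tor n i s) = 1 + (s - 1) • (NN n i * (NN n i)ᵀ) + (s⁻¹ - 1) • ((NN n i)ᵀ * NN n i) := by
  rcases Nat.lt_or_ge i n with hi | hi
  · have e1 : NN n i * (NN n i)ᵀ = EE n (i-1) (i-1) + EE n (n+i) (n+i) := by
      rw [NN_lt hi]
      simp only [Matrix.transpose_sub, EE_T, mul_sub, sub_mul]
      simp (disch := omega) only [EE_ne, EE_eq]
      simp
    have e2 : (NN n i)ᵀ * (NN n i) = EE n i i + EE n (n+i-1) (n+i-1) := by
      rw [NN_lt hi]
      simp only [Matrix.transpose_sub, EE_T, mul_sub, sub_mul]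
      simp (disch := omega) only [EE_ne, EE_eq]
      simp
    rw [e1, e2, TT]
    simp only [EE_diag, Matrix.diagonal_add, ← Matrix.diagonal_one, ← Matrix.diagonal_smul]
    congr 1
    ext p
    simp only [tt, tor, Pi.smul_apply, smul_eq_mul]
    generalize (p : ℕ) = k
    rw [if_pos hi, if_pos hi]
    by_cases c1 : k = i - 1
    · simp (disch := omega) only [if_pos, if_neg]; ring
    by_cases c2 : k = i
    · simp (disch := omega) only [if_pos, if_neg]; ring
    by_cases c3 : k = n + i - 1
    · simp (disch := omega) only [if_pos, if_neg]; ring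
    by_cases c4 : k = n + i
    · simp (disch := omega) only [if_pos, if_neg]; field_simp; ring
    by_cases c5 : k < n
    · simp (disch := omega) only [if_pos, if_neg]; ring
    · simp (disch := omega) only [if_pos, if_neg]; simp
  · obtain rfl : i = n := by omega
    have e1 : NN i i * (NN i i)ᵀ = EE i (i-2) (i-2) + EE i (i-1) (i-1) := by
      rw [NN_n]
      simp only [Matrix.transpose_sub, EE_T, mul_sub, sub_mul]
      simp (disch := omega) only [EE_ne, EE_eq]
      simp
    have e2 : (NN i i)ᵀ * (NN i i) = EE i (2*i-1) (2*i-1) + EE i (2*i-2) (2*i-2) := by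
      rw [NN_n]
      simp only [Matrix.transpose_sub, EE_T, mul_sub, sub_mul]
      simp (disch := omega) only [EE_ne, EE_eq]
      simp
    rw [e1, e2, TT]
    simp only [EE_diag, Matrix.diagonal_add, ← Matrix.diagonal_one, ← Matrix.diagonal_smul]
    congr 1
    ext p
    simp only [tt, tor, Pi.smul_apply, smul_eq_mul]
    generalize (p : ℕ) = k
    rw [if_neg (lt_irrefl i), if_neg (lt_irrefl i)]
    by_cases c1 : k = i - 1
    · simp (disch := omega) only [if_pos, if_neg]; ring
    by_cases c2 : k = i - 2
    · simp (disch := omega) only [if_pos, if_neg]; ring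
    by_cases c3 : k = 2 * i - 1
    · simp (disch := omega) only [if_pos, if_neg]; ring
    by_cases c4 : k = 2 * i - 2
    · simp (disch := omega) only [if_pos, if_neg]; ring
    by_cases c5 : k < i
    · simp (disch := omega) only [if_pos, if_neg]; ring
    · simp (disch := omega) only [if_pos, if_neg]; simp

lemma NNTN {n i : ℕ} (hn : 2 ≤ n) (h1 : 1 ≤ i) (h2 : i ≤ n) : NN n i * (NN n i)ᵀ * NN n i = NN n i := by
  rcases Nat.lt_or_ge i n with hi | hi
  · rw [NN_lt hi]
    simp only [Matrix.transpose_sub, EE_T, mul_sub, sub_mul]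
    simp (disch := omega) only [EE_ne, EE_eq]
    simp
  · obtain rfl : i = n := by omega
    rw [NN_n]
    simp only [Matrix.transpose_sub, EE_T, mul_sub, sub_mul]
    simp (disch := omega) only [EE_ne, EE_eq]
    simp

end matSec

section grpSec

lemma x_zero {n i : ℕ} (hn : 2 ≤ n) (h1 : 1 ≤ i) (h2 : i ≤ n) : xMat n i 0 = 1 := by
  rw [xMat_eq hn h1 h2]; simp

lemma x_add {n i : ℕ} (hn : 2 ≤ n) (h1 : 1 ≤ i) (h2 : i ≤ n) (a b : ℝ) :
    xMat n i a * xMat n i b = xMat n i (a + b) := by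
  simp only [xMat_eq hn h1 h2]
  simp only [add_mul, mul_add, one_mul, mul_one, smul_mul_assoc, mul_smul_comm, NN_sq hn h1 h2, smul_zero,
    add_zero, add_smul]
  abel

lemma comm_aux {n : ℕ} {N M : Matrix (Fin (2 * n)) (Fin (2 * n)) ℝ} (h : N * M = M * N) (a b : ℝ) :
    (1 + a • N) * (1 + b • M) = (1 + b • M) * (1 + a • N) := by
  simp only [add_mul, mul_add, one_mul, mul_one, smul_mul_assoc, mul_smul_comm, h]
  module

lemma braid_aux {n : ℕ} {N M : Matrix (Fin (2 * n)) (Fin (2 * n)) ℝ} (h1 : N * N = 0) (h2 : M * M = 0)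
    (h3 : N * M * N = 0) (h4 : M * N * M = 0) (a b c : ℝ) (ha : 0 < a) (hc : 0 < c) :
    (1 + a • N) * (1 + b • M) * (1 + c • N) =
      (1 + (b * c / (a + c)) • M) * (1 + (a + c) • N) * (1 + (a * b / (a + c)) • M) := by
  have hac : a + c ≠ 0 := by positivity
  have e : ∀ (N M : Matrix (Fin (2 * n)) (Fin (2 * n)) ℝ) (a b c : ℝ), N * N = 0 → N * M * N = 0 →
      (1 + a • N) * (1 + b • M) * (1 + c • N) =
        1 + (a + c) • N + b • M + (a * b) • (N * M) + (b * c) • (M * N) := by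
    intro N M a b c h1 h3
    simp only [add_mul, mul_add, one_mul, mul_one, smul_mul_assoc, mul_smul_comm, h1, h3,
      smul_zero, add_zero]
    module
  rw [e N M a b c h1 h3, e M N _ _ _ h2 h4]
  have f1 : b * c / (a + c) + a * b / (a + c) = b := by field_simp; ring
  have f2 : b * c / (a + c) * (a + c) = b * c := by field_simp
  have f3 : (a + c) * (a * b / (a + c)) = a * b := by field_simp
  rw [f1, f2, f3]; abel

lemma x_comm {n i j : ℕ} (hn : 2 ≤ n) (h1 : 1 ≤ i) (h2 : i + 2 ≤ j) (h3 : j < n) (a b : ℝ) :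
    xMat n i a * xMat n j b = xMat n j b * xMat n i a := by
  rw [xMat_eq hn h1 (by omega), xMat_eq hn (by omega) (by omega)]
  exact comm_aux (NN_comm hn h1 h2 h3) a b

lemma x_commn {n i : ℕ} (hn : 2 ≤ n) (h1 : 1 ≤ i) (h2 : i < n) (h3 : i + 2 ≠ n) (a b : ℝ) :
    xMat n i a * xMat n n b = xMat n n b * xMat n i a := by
  rw [xMat_eq hn h1 (by omega), xMat_eq hn (by omega) (by omega)]
  exact comm_aux (NN_commn hn h1 h2 h3) a b

lemma y_eq {n i : ℕ} (hn : 2 ≤ n) (h1 : 1 ≤ i) (h2 : i ≤ n) (t : ℝ) :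
    (xMat n i t)ᵀ = 1 + t • (NN n i)ᵀ := by
  rw [xMat_eq hn h1 h2]; simp

lemma xy_ne {n i j : ℕ} (hn : 2 ≤ n) (h1 : 1 ≤ i) (h2 : i ≤ n) (h3 : 1 ≤ j) (h4 : j ≤ n) (h : i ≠ j)
    (a b : ℝ) : xMat n i a * (xMat n j b)ᵀ = (xMat n j b)ᵀ * xMat n i a := by
  rw [y_eq hn h3 h4, xMat_eq hn h1 h2]
  exact comm_aux (NN_T hn h1 h2 h3 h4 h) a b

lemma xy_same {n i : ℕ} (hn : 2 ≤ n) (h1 : 1 ≤ i) (h2 : i ≤ n) (a b : ℝ) (h : 0 < 1 + a * b) :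
    xMat n i a * (xMat n i b)ᵀ =
      (xMat n i (b / (1 + a * b)))ᵀ * TT n (tor n i (1 + a * b)) * xMat n i (a / (1 + a * b)) := by
  rw [y_eq hn h1 h2, y_eq hn h1 h2, xMat_eq hn h1 h2, xMat_eq hn h1 h2, TT_tor hn h1 h2 _ h]
  have e1 := NN_sq hn h1 h2
  have e2 : (NN n i)ᵀ * (NN n i)ᵀ = 0 := by
    rw [← Matrix.transpose_mul, e1, Matrix.transpose_zero]
  have e3 := NNTN hn h1 h2
  have e4 : (NN n i)ᵀ * NN n i * (NN n i)ᵀ = (NN n i)ᵀ := by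
    have := congrArg Matrix.transpose e3
    simpa only [Matrix.transpose_mul, Matrix.transpose_transpose, mul_assoc] using this
  generalize NN n i = N at *
  generalize Nᵀ = M at *
  set s := 1 + a * b with hs
  have hs' : s ≠ 0 := h.ne'
  have f1 : (1 + (s - 1) • (N * M) + (s⁻¹ - 1) • (M * N)) * (1 + (a / s) • N)
      = 1 + (s - 1) • (N * M) + (s⁻¹ - 1) • (M * N) + a • N := by
    have g1 : M * N * N = 0 := by rw [mul_assoc, e1, mul_zero]
    simp only [add_mul, mul_add, one_mul, mul_one, smul_mul_assoc, mul_smul_comm, e3, g1, smul_zero,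
      add_zero]
    match_scalars <;> field_simp <;> ring
  have f2 : (1 + (b / s) • M) * (1 + (s - 1) • (N * M) + (s⁻¹ - 1) • (M * N) + a • N)
      = 1 + (s - 1) • (N * M) + a • N + b • M := by
    have g1 : M * (N * M) = M := by rw [← mul_assoc, e4]
    have g2 : M * (M * N) = 0 := by rw [← mul_assoc, e2, zero_mul]
    simp only [add_mul, mul_add, one_mul, mul_one, smul_mul_assoc, mul_smul_comm, g1, g2, smul_zero,
      add_zero]
    match_scalars <;> field_simp <;> rw [hs] <;> ring
  rw [mul_assoc, f1, f2]
  simp only [add_mul, mul_add, one_mul, mul_one, smul_mul_assoc, mul_smul_comm]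
  rw [show s - 1 = b * a by rw [hs]; ring]
  module

lemma x_TT {n i : ℕ} (hn : 2 ≤ n) (h1 : 1 ≤ i) (h2 : i ≤ n) (d : ℕ → ℝ) (hd : ∀ k, 0 < d k) (t : ℝ) :
    xMat n i t * TT n d = TT n d * xMat n i (t * chi n i d) := by
  rw [xMat_eq hn h1 h2, xMat_eq hn h1 h2, add_mul, mul_add, smul_mul_assoc, NN_TT hn h1 h2 d hd]
  simp [smul_smul]

lemma TT_T (n : ℕ) (d : ℕ → ℝ) : (TT n d)ᵀ = TT n d := Matrix.diagonal_transpose _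

lemma TT_y {n i : ℕ} (hn : 2 ≤ n) (h1 : 1 ≤ i) (h2 : i ≤ n) (d : ℕ → ℝ) (hd : ∀ k, 0 < d k) (t : ℝ) :
    TT n d * (xMat n i t)ᵀ = (xMat n i (t * chi n i d))ᵀ * TT n d := by
  have := congrArg Matrix.transpose (x_TT hn h1 h2 d hd t)
  simpa only [Matrix.transpose_mul, TT_T] using this

lemma TT_mul (n : ℕ) (d e : ℕ → ℝ) : TT n d * TT n e = TT n (fun k => d k * e k) := by
  rw [TT, TT, TT, Matrix.diagonal_mul_diagonal]
  congr 1; ext p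
  simp only [tt]; split_ifs
  · rfl
  · rw [mul_inv]

lemma TT_one (n : ℕ) : TT n (fun _ => 1) = 1 := by
  rw [TT, ← Matrix.diagonal_one]; congr 1; ext p; simp [tt]

lemma chi_pos {n i : ℕ} {d : ℕ → ℝ} (hd : ∀ k, 0 < d k) : 0 < chi n i d := by
  unfold chi
  have := hd (i - 1); have := hd i; have := hd (n - 2); have := hd (n - 1)
  split_ifs <;> positivity

lemma tor_pos {n i : ℕ} {s : ℝ} (hs : 0 < s) (k : ℕ) : 0 < tor n i s k := by
  unfold tor; split_ifs <;> positivity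

def Bd (K r : ℝ) : Prop := K⁻¹ ≤ r ∧ r ≤ K

lemma Bd.pos {K r : ℝ} (hK : 1 ≤ K) (h : Bd K r) : 0 < r :=
  lt_of_lt_of_le (by positivity) h.1

lemma Bd.mono {K L r : ℝ} (hK : 1 ≤ K) (hL : K ≤ L) (h : Bd K r) : Bd L r :=
  ⟨(inv_anti₀ (by positivity) hL).trans h.1, h.2.trans hL⟩

lemma Bd.one {K : ℝ} (hK : 1 ≤ K) : Bd K 1 := ⟨inv_le_one_of_one_le₀ hK, hK⟩

lemma Bd.mul {K L r s : ℝ} (hK : 1 ≤ K) (hL : 1 ≤ L) (h : Bd K r) (h' : Bd L s) : Bd (K * L) (r * s) := by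
  refine ⟨?_, mul_le_mul h.2 h'.2 (h'.pos hL).le (by positivity)⟩
  rw [mul_inv]
  exact mul_le_mul h.1 h'.1 (by positivity) (h.pos hK).le

lemma Bd.inv {K r : ℝ} (hK : 1 ≤ K) (h : Bd K r) : Bd K r⁻¹ :=
  ⟨inv_anti₀ (h.pos hK) h.2, (inv_le_comm₀ (h.pos hK) (by positivity)).2 h.1⟩

lemma chi_bd {n i : ℕ} {K : ℝ} {d : ℕ → ℝ} (hK : 1 ≤ K) (hd : ∀ k, Bd K (d k)) :
    Bd (K * K) (chi n i d) := by
  unfold chi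
  split_ifs
  · exact ((hd _).inv hK).mul hK hK (hd _)
  · exact ((hd _).inv hK).mul hK hK ((hd _).inv hK)

lemma tor_bd {n i : ℕ} {K s : ℝ} (hK : 1 ≤ K) (hs : Bd K s) (k : ℕ) : Bd K (tor n i s k) := by
  unfold tor
  split_ifs <;> first | exact hs | exact hs.inv hK | exact Bd.one hK

/-- bounded exchange -/
lemma xy_bd {n i j : ℕ} (hn : 2 ≤ n) (h1 : 1 ≤ i) (h2 : i ≤ n) (h3 : 1 ≤ j) (h4 : j ≤ n) {K a b : ℝ}
    (hK : 1 ≤ K) (ha : 0 ≤ a) (haK : a ≤ K) (hb : Bd K b) :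
    ∃ b' d a', Bd (K * (1 + K * K)) b' ∧ (∀ k, Bd (K * (1 + K * K)) (d k)) ∧ 0 ≤ a' ∧
      a' ≤ K * (1 + K * K) ∧
      xMat n i a * (xMat n j b)ᵀ = (xMat n j b')ᵀ * TT n d * xMat n i a' := by
  have hK2 : 1 ≤ 1 + K * K := by nlinarith
  have hKK : K ≤ K * (1 + K * K) := by nlinarith
  have hK3 : 1 ≤ K * (1 + K * K) := by linarith
  by_cases h : i = j
  · subst h
    have hb0 := hb.pos hK
    have hs1 : 1 ≤ 1 + a * b := by nlinarith
    have hs : Bd (1 + K * K) (1 + a * b) := by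
      refine ⟨(inv_le_one_of_one_le₀ hK2).trans hs1, ?_⟩
      have := mul_le_mul haK hb.2 hb0.le (by linarith)
      linarith
    refine ⟨_, _, _, ?_, ?_, ?_, ?_, xy_same hn h1 h2 a b (by linarith)⟩
    · rw [div_eq_mul_inv]; exact hb.mul hK hK2 (hs.inv hK2)
    · exact fun k => (tor_bd hK2 hs k).mono hK2 (by nlinarith)
    · positivity
    · exact ((div_le_self ha hs1).trans haK).trans hKK
  · refine ⟨b, fun _ => 1, a, hb.mono hK hKK, fun _ => Bd.one hK3, ha, haK.trans hKK, ?_⟩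
    rw [TT_one, mul_one, xy_ne hn h1 h2 h3 h4 h]

lemma xy_pos {n i j : ℕ} (hn : 2 ≤ n) (h1 : 1 ≤ i) (h2 : i ≤ n) (h3 : 1 ≤ j) (h4 : j ≤ n) {a b : ℝ}
    (ha : 0 < a) (hb : 0 < b) :
    ∃ b' d a', 0 < b' ∧ (∀ k, 0 < d k) ∧ 0 < a' ∧
      xMat n i a * (xMat n j b)ᵀ = (xMat n j b')ᵀ * TT n d * xMat n i a' := by
  by_cases h : i = j
  · subst h
    have hs1 : 0 < 1 + a * b := by positivity
    exact ⟨_, _, _, by positivity, fun k => tor_pos hs1 k, by positivity, xy_same hn h1 h2 a b hs1⟩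
  · refine ⟨b, fun _ => 1, a, hb, fun _ => one_pos, ha, ?_⟩
    rw [TT_one, mul_one, xy_ne hn h1 h2 h3 h4 h]

open Pointwise

def Xp (n i : ℕ) : Set (Matrix (Fin (2 * n)) (Fin (2 * n)) ℝ) := {g | ∃ t, 0 < t ∧ g = xMat n i t}
def Xc (n : ℕ) (K : ℝ) (i : ℕ) : Set (Matrix (Fin (2 * n)) (Fin (2 * n)) ℝ) :=
  {g | ∃ t, (0 ≤ t ∧ t ≤ K) ∧ g = xMat n i t}
def Yk (n : ℕ) (K : ℝ) (i : ℕ) : Set (Matrix (Fin (2 * n)) (Fin (2 * n)) ℝ) :=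
  {g | ∃ t, Bd K t ∧ g = (xMat n i t)ᵀ}

lemma Xp_hecke {n : ℕ} (hn : 2 ≤ n) : Hecke n (Xp n) where
  idem i h1 h2 := by
    ext g; constructor
    · rintro ⟨_, ⟨a, ha, rfl⟩, _, ⟨b, hb, rfl⟩, rfl⟩
      exact ⟨a + b, by positivity, x_add hn h1 h2 a b⟩
    · rintro ⟨a, ha, rfl⟩
      exact ⟨_, ⟨a / 2, by positivity, rfl⟩, _, ⟨a / 2, by positivity, rfl⟩, by
        simp only [x_add hn h1 h2]; congr 1; ring⟩
  comm i j h1 h2 h3 := by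
    ext g; constructor
    · rintro ⟨_, ⟨a, ha, rfl⟩, _, ⟨b, hb, rfl⟩, rfl⟩
      exact ⟨_, ⟨b, hb, rfl⟩, _, ⟨a, ha, rfl⟩, (x_comm hn h1 h2 h3 a b).symm⟩
    · rintro ⟨_, ⟨a, ha, rfl⟩, _, ⟨b, hb, rfl⟩, rfl⟩
      exact ⟨_, ⟨b, hb, rfl⟩, _, ⟨a, ha, rfl⟩, x_comm hn h1 h2 h3 b a⟩
  commn i h1 h2 h3 := by
    ext g; constructor
    · rintro ⟨_, ⟨a, ha, rfl⟩, _, ⟨b, hb, rfl⟩, rfl⟩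
      exact ⟨_, ⟨b, hb, rfl⟩, _, ⟨a, ha, rfl⟩, (x_commn hn h1 h2 h3 a b).symm⟩
    · rintro ⟨_, ⟨a, ha, rfl⟩, _, ⟨b, hb, rfl⟩, rfl⟩
      exact ⟨_, ⟨b, hb, rfl⟩, _, ⟨a, ha, rfl⟩, x_commn hn h1 h2 h3 b a⟩
  braid i h1 h2 := by
    have e : ∀ a b c : ℝ, 0 < a → 0 < c → xMat n i a * xMat n (i + 1) b * xMat n i c =
        xMat n (i + 1) (b * c / (a + c)) * xMat n i (a + c) * xMat n (i + 1) (a * b / (a + c)) := by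
      intro a b c ha hc
      simp only [xMat_eq hn h1 (show i ≤ n by omega), xMat_eq hn (show 1 ≤ i + 1 by omega) (show i + 1 ≤ n by omega)]
      exact braid_aux (NN_sq hn h1 (by omega)) (NN_sq hn (by omega) (by omega)) (NN_tri1 h1 h2)
        (NN_tri2 h1 h2) a b c ha hc
    have e' : ∀ a b c : ℝ, 0 < a → 0 < c → xMat n (i + 1) a * xMat n i b * xMat n (i + 1) c =
        xMat n i (b * c / (a + c)) * xMat n (i + 1) (a + c) * xMat n i (a * b / (a + c)) := by
      intro a b c ha hc
      simp only [xMat_eq hn h1 (show i ≤ n by omega), xMat_eq hn (show 1 ≤ i + 1 by omega) (show i + 1 ≤ n by omega)]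
      exact braid_aux (NN_sq hn (by omega) (by omega)) (NN_sq hn h1 (by omega)) (NN_tri2 h1 h2)
        (NN_tri1 h1 h2) a b c ha hc
    ext g; constructor
    · rintro ⟨_, ⟨_, ⟨a, ha, rfl⟩, _, ⟨b, hb, rfl⟩, rfl⟩, _, ⟨c, hc, rfl⟩, rfl⟩
      exact ⟨_, ⟨_, ⟨_, by positivity, rfl⟩, _, ⟨_, by positivity, rfl⟩, rfl⟩, _, ⟨_, by positivity, rfl⟩,
        (e a b c ha hc).symm⟩
    · rintro ⟨_, ⟨_, ⟨a, ha, rfl⟩, _, ⟨b, hb, rfl⟩, rfl⟩, _, ⟨c, hc, rfl⟩, rfl⟩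
      exact ⟨_, ⟨_, ⟨_, by positivity, rfl⟩, _, ⟨_, by positivity, rfl⟩, rfl⟩, _, ⟨_, by positivity, rfl⟩,
        (e' a b c ha hc).symm⟩
  braidn i h1 h2 := by
    have e : ∀ a b c : ℝ, 0 < a → 0 < c → xMat n i a * xMat n n b * xMat n i c =
        xMat n n (b * c / (a + c)) * xMat n i (a + c) * xMat n n (a * b / (a + c)) := by
      intro a b c ha hc
      simp only [xMat_eq hn h1 (show i ≤ n by omega), xMat_eq hn (show 1 ≤ n by omega) (show n ≤ n by omega)]
      exact braid_aux (NN_sq hn h1 (by omega)) (NN_sq hn (by omega) (by omega)) (NN_tri3 h1 h2)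
        (NN_tri4 h1 h2) a b c ha hc
    have e' : ∀ a b c : ℝ, 0 < a → 0 < c → xMat n n a * xMat n i b * xMat n n c =
        xMat n i (b * c / (a + c)) * xMat n n (a + c) * xMat n i (a * b / (a + c)) := by
      intro a b c ha hc
      simp only [xMat_eq hn h1 (show i ≤ n by omega), xMat_eq hn (show 1 ≤ n by omega) (show n ≤ n by omega)]
      exact braid_aux (NN_sq hn (by omega) (by omega)) (NN_sq hn h1 (by omega)) (NN_tri4 h1 h2)
        (NN_tri3 h1 h2) a b c ha hc
    ext g; constructor
    · rintro ⟨_, ⟨_, ⟨a, ha, rfl⟩, _, ⟨b, hb, rfl⟩, rfl⟩, _, ⟨c, hc, rfl⟩, rfl⟩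
      exact ⟨_, ⟨_, ⟨_, by positivity, rfl⟩, _, ⟨_, by positivity, rfl⟩, rfl⟩, _, ⟨_, by positivity, rfl⟩,
        (e a b c ha hc).symm⟩
    · rintro ⟨_, ⟨_, ⟨a, ha, rfl⟩, _, ⟨b, hb, rfl⟩, rfl⟩, _, ⟨c, hc, rfl⟩, rfl⟩
      exact ⟨_, ⟨_, ⟨_, by positivity, rfl⟩, _, ⟨_, by positivity, rfl⟩, rfl⟩, _, ⟨_, by positivity, rfl⟩,
        (e' a b c ha hc).symm⟩

end grpSec

section bndSec
open Pointwise

abbrev JJ (n : ℕ) : Matrix (Fin n) (Fin (2 * n)) ℝ := IdA 0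

def lo {n : ℕ} (p : Fin n) : Fin (2 * n) := ⟨(p : ℕ), by have := p.isLt; omega⟩
def hi {n : ℕ} (p : Fin n) : Fin (2 * n) := ⟨n + (p : ℕ), by have := p.isLt; omega⟩

lemma JJ_apply {n : ℕ} (p : Fin n) (q : Fin (2 * n)) : JJ n p q = if q = lo p then 1 else 0 := by
  have hp := p.isLt
  simp only [JJ, IdA, Matrix.of_apply, lo, Fin.ext_iff, Matrix.zero_apply]
  split_ifs <;> first | omega | rfl

lemma JJ_mul {n : ℕ} {ι : Type*} (g : Matrix (Fin (2 * n)) ι ℝ) (p : Fin n) (q : ι) :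
    (JJ n * g) p q = g (lo p) q := by
  rw [Matrix.mul_apply, Finset.sum_eq_single (lo p)]
  · rw [JJ_apply, if_pos rfl, one_mul]
  · intro b _ hb; rw [JJ_apply, if_neg hb, zero_mul]
  · simp

lemma mul_JJT {n : ℕ} {ι : Type*} (g : Matrix ι (Fin (2 * n)) ℝ) (p : ι) (q : Fin n) :
    (g * (JJ n)ᵀ) p q = g p (lo q) := by
  rw [← Matrix.transpose_apply (g * (JJ n)ᵀ), Matrix.transpose_mul, Matrix.transpose_transpose, JJ_mul]
  rfl

lemma mul_IdA_lo {n : ℕ} (C A : Matrix (Fin n) (Fin n) ℝ) (p q : Fin n) :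
    (C * IdA A) p (lo q) = C p q := by
  rw [Matrix.mul_apply, Finset.sum_eq_single q]
  · simp [IdA, lo]
  · intro b _ hb
    have : (b : ℕ) ≠ q := fun h => hb (Fin.ext h)
    simp [IdA, lo, this]
  · simp

lemma mul_IdA_hi {n : ℕ} (C A : Matrix (Fin n) (Fin n) ℝ) (p q : Fin n) :
    (C * IdA A) p (hi q) = (C * A) p q := by
  rw [Matrix.mul_apply, Matrix.mul_apply]
  apply Finset.sum_congr rfl
  intro x _
  simp [IdA, hi]

lemma lohi {n : ℕ} (q : Fin (2 * n)) : (∃ r : Fin n, q = lo r) ∨ ∃ r : Fin n, q = hi r := by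
  rcases Nat.lt_or_ge q n with h | h
  · exact Or.inl ⟨⟨q, h⟩, rfl⟩
  · refine Or.inr ⟨⟨q - n, by have := q.isLt; omega⟩, ?_⟩
    simp only [hi, Fin.ext_iff]; omega

lemma IdA_JJT {n : ℕ} (A : Matrix (Fin n) (Fin n) ℝ) : IdA A * (JJ n)ᵀ = 1 := by
  ext p q
  rw [mul_JJT, ← Matrix.one_mul (IdA A), mul_IdA_lo]

lemma JJ_JJT (n : ℕ) : JJ n * (JJ n)ᵀ = 1 := IdA_JJT 0

lemma van {n : ℕ} (g : Matrix (Fin (2 * n)) (Fin (2 * n)) ℝ)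
    (h : ∀ p q : Fin (2 * n), (p : ℕ) < n → n ≤ (q : ℕ) → g p q = 0) :
    JJ n * g = JJ n * g * (JJ n)ᵀ * JJ n := by
  ext p q
  rcases lohi q with ⟨r, rfl⟩ | ⟨r, rfl⟩
  · rw [mul_IdA_lo, mul_JJT]
  · rw [mul_IdA_hi, Matrix.mul_zero, JJ_mul]
    exact h _ _ p.isLt (by simp [hi])

def PP (n : ℕ) : Set (Matrix (Fin (2 * n)) (Fin (2 * n)) ℝ) :=
  {g | ∃ C C' : Matrix (Fin n) (Fin n) ℝ, C * C' = 1 ∧ JJ n * g = C * JJ n}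

lemma PP_mul {n : ℕ} {g h : Matrix (Fin (2 * n)) (Fin (2 * n)) ℝ} (hg : g ∈ PP n) (hh : h ∈ PP n) :
    g * h ∈ PP n := by
  obtain ⟨C, C', h1, h2⟩ := hg
  obtain ⟨D, D', h3, h4⟩ := hh
  refine ⟨C * D, D' * C', ?_, ?_⟩
  · rw [Matrix.mul_assoc, ← Matrix.mul_assoc D, h3, Matrix.one_mul, h1]
  · rw [← Matrix.mul_assoc, h2, Matrix.mul_assoc, h4, Matrix.mul_assoc]

lemma PP_one (n : ℕ) : (1 : Matrix (Fin (2 * n)) (Fin (2 * n)) ℝ) ∈ PP n :=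
  ⟨1, 1, by simp, by simp⟩

lemma PP_of {n : ℕ} {g g' : Matrix (Fin (2 * n)) (Fin (2 * n)) ℝ} (hg : g * g' = 1)
    (h : ∀ p q : Fin (2 * n), (p : ℕ) < n → n ≤ (q : ℕ) → g p q = 0) : g ∈ PP n := by
  refine ⟨JJ n * g * (JJ n)ᵀ, JJ n * g' * (JJ n)ᵀ, ?_, van g h⟩
  have := van g h
  calc JJ n * g * (JJ n)ᵀ * (JJ n * g' * (JJ n)ᵀ)
      = (JJ n * g * (JJ n)ᵀ * JJ n) * (g' * (JJ n)ᵀ) := by simp only [Matrix.mul_assoc]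
    _ = JJ n * (g * g') * (JJ n)ᵀ := by rw [← this]; simp only [Matrix.mul_assoc]
    _ = 1 := by rw [hg, Matrix.mul_one, JJ_JJT]

lemma x_inv {n i : ℕ} (hn : 2 ≤ n) (h1 : 1 ≤ i) (h2 : i ≤ n) (t : ℝ) : xMat n i t * xMat n i (-t) = 1 := by
  rw [x_add hn h1 h2, add_neg_cancel, x_zero hn h1 h2]

lemma PP_x {n i : ℕ} (hn : 2 ≤ n) (h1 : 1 ≤ i) (h2 : i < n) (t : ℝ) : xMat n i t ∈ PP n := by
  refine PP_of (x_inv hn h1 h2.le t) fun p q hp hq => ?_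
  simp only [xMat, Matrix.of_apply]
  split_ifs <;> first | omega | simp

lemma PP_y {n i : ℕ} (hn : 2 ≤ n) (h1 : 1 ≤ i) (h2 : i ≤ n) (t : ℝ) : (xMat n i t)ᵀ ∈ PP n := by
  refine PP_of (g' := (xMat n i (-t))ᵀ) ?_ fun p q hp hq => ?_
  · rw [← Matrix.transpose_mul, x_add hn h1 h2, neg_add_cancel, x_zero hn h1 h2, Matrix.transpose_one]
  simp only [xMat, Matrix.of_apply, Matrix.transpose_apply]
  split_ifs <;> first | omega | simp

lemma PP_TT {n : ℕ} {d : ℕ → ℝ} (hd : ∀ k, 0 < d k) : TT n d ∈ PP n := by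
  refine PP_of (g' := TT n (fun k => (d k)⁻¹)) ?_ fun p q hp hq => ?_
  · rw [TT_mul, ← TT_one]; congr 1; ext k; exact mul_inv_cancel₀ (hd k).ne'
  · rw [TT, Matrix.diagonal_apply_ne]; rintro rfl; omega

lemma push_left {n : ℕ} (hn : 2 ≤ n) (v : List ℕ) (hv : ∀ i ∈ v, 1 ≤ i ∧ i ≤ n) {j : ℕ} (h1 : 1 ≤ j) (h2 : j ≤ n)
    (b : ℝ) (hb : 0 < b) (d : ℕ → ℝ) (hd : ∀ k, 0 < d k) :
    ∀ g ∈ (v.map (Xp n)).prod, ∃ b' d', 0 < b' ∧ (∀ k, 0 < d' k) ∧ ∃ g' ∈ (v.map (Xp n)).prod,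
      g * ((xMat n j b)ᵀ * TT n d) = (xMat n j b')ᵀ * TT n d' * g' := by
  induction v with
  | nil => 
    intro g hg
    refine ⟨b, d, hb, hd, 1, by simp, ?_⟩
    have : g = 1 := by simpa using hg
    rw [this]; simp
  | cons i v ih =>
    rw [List.map_cons, List.prod_cons]
    rintro _ ⟨_, ⟨a, ha, rfl⟩, g0, hg0, rfl⟩
    obtain ⟨b1, d1, hb1, hd1, g1, hg1, e1⟩ := ih (fun i hi => hv i (by simp [hi])) g0 hg0
    obtain ⟨hi1, hi2⟩ := hv i (by simp)
    obtain ⟨b2, d2, a2, hb2, hd2, ha2, e2⟩ := xy_pos hn hi1 hi2 h1 h2 ha hb1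
    refine ⟨b2, fun k => d2 k * d1 k, hb2, fun k => mul_pos (hd2 k) (hd1 k), _,
      ⟨_, ⟨a2 * chi n i d1, mul_pos ha2 (chi_pos hd1), rfl⟩, g1, hg1, rfl⟩, ?_⟩
    calc xMat n i a * g0 * ((xMat n j b)ᵀ * TT n d)
        = xMat n i a * (g0 * ((xMat n j b)ᵀ * TT n d)) := by rw [mul_assoc]
      _ = (xMat n i a * (xMat n j b1)ᵀ) * TT n d1 * g1 := by rw [e1]; simp only [mul_assoc]
      _ = (xMat n j b2)ᵀ * TT n d2 * (xMat n i a2 * TT n d1) * g1 := by rw [e2]; simp only [mul_assoc]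
      _ = (xMat n j b2)ᵀ * (TT n d2 * TT n d1) * (xMat n i (a2 * chi n i d1) * g1) := by
        rw [x_TT hn hi1 hi2 d1 hd1]; simp only [mul_assoc]
      _ = _ := by rw [TT_mul]

lemma Yk_mono {n : ℕ} {K L : ℝ} (hK : 1 ≤ K) (hL : K ≤ L) (w : List ℕ) :
    (w.map (Yk n K)).prod ⊆ (w.map (Yk n L)).prod := by
  induction w with
  | nil => simp
  | cons i w ih =>
    simp only [List.map_cons, List.prod_cons]
    apply Set.mul_subset_mul _ ih
    rintro _ ⟨t, ht, rfl⟩; exact ⟨t, ht.mono hK hL, rfl⟩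

lemma TT_list {n : ℕ} (hn : 2 ≤ n) (w : List ℕ) (hw : ∀ i ∈ w, 1 ≤ i ∧ i ≤ n) {K L : ℝ} (hK : 1 ≤ K)
    (hL : 1 ≤ L) {d : ℕ → ℝ} (hd : ∀ k, Bd L (d k)) :
    ∀ h ∈ (w.map (Yk n K)).prod, ∃ h' ∈ (w.map (Yk n (K * (L * L)))).prod, TT n d * h = h' * TT n d := by
  induction w with
  | nil => 
    intro h hh
    have : h = 1 := by simpa using hh
    exact ⟨1, by simp, by simp [this]⟩
  | cons i w ih =>
    rw [List.map_cons, List.prod_cons]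
    rintro _ ⟨_, ⟨b, hb, rfl⟩, h0, hh0, rfl⟩
    obtain ⟨h1, hh1, e1⟩ := ih (fun i hi => hw i (by simp [hi])) h0 hh0
    obtain ⟨hi1, hi2⟩ := hw i (by simp)
    refine ⟨_, ⟨_, ⟨b * chi n i d, hb.mul hK (by nlinarith) (chi_bd hL hd), rfl⟩, h1, hh1, rfl⟩, ?_⟩
    simp only
    rw [← mul_assoc, TT_y hn hi1 hi2 d (fun k => (hd k).pos hL), mul_assoc, e1, mul_assoc]

lemma TT_listX {n : ℕ} (hn : 2 ≤ n) (w : List ℕ) (hw : ∀ i ∈ w, 1 ≤ i ∧ i ≤ n) {K L : ℝ} (hK : 1 ≤ K)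
    (hL : 1 ≤ L) {d : ℕ → ℝ} (hd : ∀ k, Bd L (d k)) :
    ∀ h ∈ (w.map (Xc n K)).prod, ∃ h' ∈ (w.map (Xc n (K * (L * L)))).prod, h * TT n d = TT n d * h' := by
  induction w with
  | nil => 
    intro h hh
    have : h = 1 := by simpa using hh
    exact ⟨1, by simp, by simp [this]⟩
  | cons i w ih =>
    rw [List.map_cons, List.prod_cons]
    rintro _ ⟨_, ⟨b, hb, rfl⟩, h0, hh0, rfl⟩
    obtain ⟨h1, hh1, e1⟩ := ih (fun i hi => hw i (by simp [hi])) h0 hh0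
    obtain ⟨hi1, hi2⟩ := hw i (by simp)
    have hd0 := fun k => (hd k).pos hL
    refine ⟨_, ⟨_, ⟨b * chi n i d, ⟨mul_nonneg hb.1 (chi_pos hd0).le,
      mul_le_mul hb.2 (chi_bd hL hd).2 (chi_pos hd0).le (by linarith)⟩, rfl⟩, h1, hh1, rfl⟩, ?_⟩
    simp only
    rw [mul_assoc, e1, ← mul_assoc, x_TT hn hi1 hi2 d hd0, mul_assoc]

lemma push_right {n : ℕ} (hn : 2 ≤ n) (w : List ℕ) (hw : ∀ i ∈ w, 1 ≤ i ∧ i ≤ n) {i : ℕ} (h1 : 1 ≤ i)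
    (h2 : i ≤ n) : ∀ K : ℝ, 1 ≤ K → ∃ K1 : ℝ, 1 ≤ K1 ∧ ∀ a, 0 ≤ a → a ≤ K → 
      ∀ h ∈ (w.map (Yk n K)).prod, ∃ h' ∈ (w.map (Yk n K1)).prod, ∃ d a', (∀ k, Bd K1 (d k)) ∧ 0 ≤ a' ∧
        a' ≤ K1 ∧ xMat n i a * h = h' * TT n d * xMat n i a' := by
  induction w with
  | nil => 
    intro K hK
    refine ⟨K, hK, fun a ha haK h hh => ⟨1, by simp, fun _ => 1, a, fun _ => Bd.one hK, ha, haK, ?_⟩⟩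
    have : h = 1 := by simpa using hh
    rw [this, TT_one]; simp
  | cons j w ih =>
    intro K hK
    obtain ⟨hj1, hj2⟩ := hw j (by simp)
    have hw' : ∀ i ∈ w, 1 ≤ i ∧ i ≤ n := fun i hi => hw i (by simp [hi])
    have hKK : K ≤ K * (1 + K * K) := by nlinarith [mul_self_nonneg K]
    have H : ∀ a b : ℝ, 0 ≤ a → a ≤ K → Bd K b → _ := fun a b ha haK hb => 
      xy_bd (n := n) hn h1 h2 hj1 hj2 (K := K) (a := a) (b := b) hK ha haK hb
    generalize K * (1 + K * K) = K2 at *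
    have hK2 : 1 ≤ K2 := hK.trans hKK
    obtain ⟨K3, hK3, ih⟩ := ih hw' K2 hK2
    have hq : 1 ≤ K2 * K2 := by nlinarith
    have q1 : K3 ≤ K3 * (K2 * K2) := by nlinarith
    have q2 : K2 * K2 ≤ K3 * (K2 * K2) := by nlinarith
    have q3 : K2 ≤ K2 * K2 := by nlinarith
    have q4 : K2 * K3 ≤ K3 * (K2 * K2) := by nlinarith
    have q5 : 1 ≤ K2 * K3 := by nlinarith
    refine ⟨K3 * (K2 * K2), by linarith, ?_⟩
    rw [List.map_cons, List.prod_cons]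
    rintro a ha haK _ ⟨_, ⟨b, hb, rfl⟩, h0, hh0, rfl⟩
    obtain ⟨b1, d1, a1, hb1, hd1, ha1, ha1K, e1⟩ := H a b ha haK hb
    obtain ⟨h3, hh3, d2, a2, hd2, ha2, ha2K, e2⟩ := ih a1 ha1 ha1K h0 (Yk_mono hK hKK w hh0)
    obtain ⟨h4, hh4, e3⟩ := TT_list hn w hw' hK3 hK2 hd1 h3 hh3
    refine ⟨_, ⟨_, ⟨b1, hb1.mono hK2 (by linarith), rfl⟩, h4, hh4, rfl⟩, fun k => d1 k * d2 k, a2,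
      fun k => ((hd1 k).mul hK2 hK3 (hd2 k)).mono q5 q4, ha2, by linarith, ?_⟩
    calc xMat n i a * ((xMat n j b)ᵀ * h0) = (xMat n i a * (xMat n j b)ᵀ) * h0 := by rw [mul_assoc]
      _ = (xMat n j b1)ᵀ * TT n d1 * (xMat n i a1 * h0) := by rw [e1]; simp only [mul_assoc]
      _ = (xMat n j b1)ᵀ * (TT n d1 * h3) * TT n d2 * xMat n i a2 := by rw [e2]; simp only [mul_assoc]
      _ = (xMat n j b1)ᵀ * h4 * (TT n d1 * TT n d2) * xMat n i a2 := by rw [e3]; simp only [mul_assoc]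
      _ = _ := by rw [TT_mul]

lemma Xc_mono {n : ℕ} {K L : ℝ} (hL : K ≤ L) (w : List ℕ) :
    (w.map (Xc n K)).prod ⊆ (w.map (Xc n L)).prod := by
  induction w with
  | nil => simp
  | cons i w ih =>
    simp only [List.map_cons, List.prod_cons]
    apply Set.mul_subset_mul _ ih
    rintro _ ⟨t, ht, rfl⟩; exact ⟨t, ⟨ht.1, ht.2.trans hL⟩, rfl⟩

lemma bounding {n : ℕ} (hn : 2 ≤ n) (v : List ℕ) (hv : ∀ i ∈ v, 1 ≤ i ∧ i ≤ n) : ∀ K : ℝ, 1 ≤ K →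
    ∃ K' : ℝ, 1 ≤ K' ∧ ∀ g ∈ (v.map (Xp n)).prod, ∀ h ∈ (v.reverse.map (Yk n K)).prod,
      ∃ p ∈ PP n, ∃ g' ∈ (v.map (Xc n K')).prod, g * h = p * g' := by
  induction v using List.reverseRecOn with
  | nil => 
    intro K hK
    refine ⟨1, le_rfl, fun g hg h hh => ⟨1, PP_one n, 1, by simp, ?_⟩⟩
    have h1 : g = 1 := by simpa using hg
    have h2 : h = 1 := by simpa using hh
    simp [h1, h2]
  | append_singleton v i ih =>
    intro K hK
    obtain ⟨hi1, hi2⟩ := hv i (by simp)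
    have hv' : ∀ i ∈ v, 1 ≤ i ∧ i ≤ n := fun i hi => hv i (by simp [hi])
    obtain ⟨K1, hK1, H1⟩ := push_right hn v.reverse (fun i hi => hv' i (by simpa using hi)) hi1 hi2 K hK
    obtain ⟨K2, hK2, H2⟩ := ih hv' K1 hK1
    have hq : 1 ≤ K1 * K1 := by nlinarith
    have q1 : K2 ≤ K2 * (K1 * K1) := by nlinarith
    have q2 : K1 * K1 ≤ K2 * (K1 * K1) := by nlinarith
    have q3 : K1 ≤ K1 * K1 := by nlinarith
    refine ⟨K2 * (K1 * K1), by linarith, ?_⟩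
    simp only [List.map_append, List.prod_append, List.reverse_append, List.map_cons, List.prod_cons,
      List.map_nil, List.prod_nil, mul_one, List.reverse_cons, List.reverse_nil, List.nil_append]
    rintro _ ⟨g0, hg0, _, ⟨t, ht, rfl⟩, rfl⟩ _ ⟨_, ⟨b, hb, rfl⟩, h0, hh0, rfl⟩
    have hb0 := hb.pos hK
    have hs : 0 < 1 + t * b := by positivity
    obtain ⟨b1, d1, hb1, hd1, g1, hg1, e1⟩ := push_left hn v hv' hi1 hi2 (b / (1 + t * b)) (by positivity)
      (tor n i (1 + t * b)) (tor_pos hs) g0 hg0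
    have haK : t / (1 + t * b) ≤ K := by
      have h3 : 1 ≤ K * b := by
        have := mul_le_mul_of_nonneg_left hb.1 (by linarith : 0 ≤ K)
        rwa [mul_inv_cancel₀ (by linarith)] at this
      rw [div_le_iff₀ hs]; nlinarith
    obtain ⟨h3, hh3, d2, a2, hd2, ha2, ha2K, e2⟩ := H1 (t / (1 + t * b)) (by positivity) haK h0 hh0
    obtain ⟨p, hp, g2, hg2, e3⟩ := H2 g1 hg1 h3 hh3
    obtain ⟨g3, hg3, e4⟩ := TT_listX hn v hv' hK2 hK1 hd2 g2 hg2
    refine ⟨(xMat n i b1)ᵀ * TT n d1 * p * TT n d2, PP_mul (PP_mul (PP_mul (PP_y hn hi1 hi2 _) (PP_TT hd1)) hp)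
      (PP_TT fun k => (hd2 k).pos hK1), _, ⟨g3, hg3, _, ⟨a2, ⟨ha2, by linarith⟩, rfl⟩, rfl⟩, ?_⟩
    simp only
    calc g0 * xMat n i t * ((xMat n i b)ᵀ * h0) = g0 * (xMat n i t * (xMat n i b)ᵀ) * h0 := by
          simp only [mul_assoc]
      _ = (g0 * ((xMat n i (b / (1 + t * b)))ᵀ * TT n (tor n i (1 + t * b)))) *
            (xMat n i (t / (1 + t * b)) * h0) := by
          rw [xy_same hn hi1 hi2 t b hs]; simp only [mul_assoc]
      _ = (xMat n i b1)ᵀ * TT n d1 * (g1 * h3) * TT n d2 * xMat n i a2 := by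
          rw [e1, e2]; simp only [mul_assoc]
      _ = (xMat n i b1)ᵀ * TT n d1 * p * (g2 * TT n d2) * xMat n i a2 := by
          rw [e3]; simp only [mul_assoc]
      _ = _ := by rw [e4]; simp only [mul_assoc]

end bndSec

section finSec
open Pointwise

def Aw (n : ℕ) : List ℕ := ((List.range n).map (fun r => decRun r 1)).flatten

lemma wordFull_eq (n : ℕ) : wordFull n = Aw n ++ wordD n := rfl

lemma mem_Aw (n i : ℕ) (h : i ∈ Aw n) : 1 ≤ i ∧ i < n := by
  simp only [Aw, decRun, List.mem_flatten, List.mem_map, List.mem_range] at h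
  obtain ⟨l, ⟨m, hm, rfl⟩, hi⟩ := h
  simp only [List.mem_reverse, List.mem_range'_1] at hi
  omega

lemma list_PP {n : ℕ} (S : ℕ → Set (Matrix (Fin (2 * n)) (Fin (2 * n)) ℝ)) (w : List ℕ)
    (h : ∀ i ∈ w, S i ⊆ PP n) : (w.map S).prod ⊆ PP n := by
  induction w with
  | nil => intro g hg; have : g = 1 := by simpa using hg
           rw [this]; exact PP_one n
  | cons i w ih =>
    rw [List.map_cons, List.prod_cons]
    rintro _ ⟨a, ha, b, hb, rfl⟩
    exact PP_mul (h i (by simp) ha) (ih (fun j hj => h j (by simp [hj])) hb)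

lemma list_unit {n : ℕ} (S : ℕ → Set (Matrix (Fin (2 * n)) (Fin (2 * n)) ℝ)) (w : List ℕ)
    (h : ∀ i ∈ w, ∀ g ∈ S i, IsUnit g) : ∀ g ∈ (w.map S).prod, IsUnit g := by
  induction w with
  | nil => intro g hg; have : g = 1 := by simpa using hg
           rw [this]; exact isUnit_one
  | cons i w ih =>
    rw [List.map_cons, List.prod_cons]
    rintro _ ⟨a, ha, b, hb, rfl⟩
    exact (h i (by simp) a ha).mul (ih (fun j hj => h j (by simp [hj])) b hb)

lemma x_unit {n i : ℕ} (hn : 2 ≤ n) (h1 : 1 ≤ i) (h2 : i ≤ n) (t : ℝ) : IsUnit (xMat n i t) :=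
  ⟨⟨_, _, x_inv hn h1 h2 t, by rw [x_add hn h1 h2, neg_add_cancel, x_zero hn h1 h2]⟩, rfl⟩

lemma list_mem {n : ℕ} (S : ℕ → Set (Matrix (Fin (2 * n)) (Fin (2 * n)) ℝ))
    (f : ℕ → Matrix (Fin (2 * n)) (Fin (2 * n)) ℝ) (w : List ℕ)
    (h : ∀ i, f i ∈ S i) : (w.map f).prod ∈ (w.map S).prod := by
  induction w with
  | nil => simp
  | cons i w ih =>
    simp only [List.map_cons, List.prod_cons]
    exact Set.mul_mem_mul (h i) ih

lemma Aw_PPp {n : ℕ} (hn : 2 ≤ n) : ((Aw n).map (Xp n)).prod ⊆ PP n := by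
  apply list_PP
  rintro i hi _ ⟨t, _, rfl⟩
  exact PP_x hn (mem_Aw n i hi).1 (mem_Aw n i hi).2 t

lemma Aw_PPc {n : ℕ} (hn : 2 ≤ n) (K : ℝ) : ((Aw n).map (Xc n K)).prod ⊆ PP n := by
  apply list_PP
  rintro i hi _ ⟨t, _, rfl⟩
  exact PP_x hn (mem_Aw n i hi).1 (mem_Aw n i hi).2 t

lemma zeps_T (n : ℕ) (ε : ℝ) : (zeps n ε)ᵀ = ((wordFull n).reverse.map (fun i => (xMat n i ε)ᵀ)).prod := by
  rw [zeps, Matrix.transpose_list_prod, List.map_map, List.map_reverse]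
  rfl

lemma bound2 {n : ℕ} (hn : 2 ≤ n) (ε : ℝ) (hε : 0 < ε) : ∃ K : ℝ, ∀ u ∈ ((wordD n).map (Xp n)).prod,
    ∃ D : Matrix (Fin n) (Fin n) ℝ, ∃ g ∈ ((wordD n).map (Xc n K)).prod,
      JJ n * u * (zeps n ε)ᵀ = D * JJ n * g := by
  have hK : 1 ≤ max 1 (max ε ε⁻¹) := le_max_left _ _
  have hB : Bd (max 1 (max ε ε⁻¹)) ε := by
    refine ⟨?_, (le_max_left _ _).trans (le_max_right _ _)⟩
    rw [inv_le_comm₀ (by positivity) hε]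
    exact (le_max_right _ _).trans (le_max_right _ _)
  obtain ⟨K, hK1, H⟩ := bounding hn (wordFull n) (fun i hi => mem_wordFull n i hn hi) _ hK
  refine ⟨K, fun u hu => ?_⟩
  have ha : ((Aw n).map (fun i => xMat n i 1)).prod ∈ ((Aw n).map (Xp n)).prod :=
    list_mem _ _ _ fun i => ⟨1, one_pos, rfl⟩
  generalize ((Aw n).map (fun i => xMat n i 1)).prod = a at ha
  obtain ⟨C, C', c1, c2⟩ := Aw_PPp hn ha
  obtain ⟨p, ⟨E, E', _, f2⟩, g', hg', e⟩ := H (a * u) (by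
    rw [wordFull_eq, List.map_append, List.prod_append]; exact Set.mul_mem_mul ha hu) (zeps n ε)ᵀ (by
    rw [zeps_T]; exact list_mem _ _ _ fun i => ⟨ε, hB, rfl⟩)
  rw [wordFull_eq, List.map_append, List.prod_append] at hg'
  obtain ⟨b, hb, g, hg, rfl⟩ := hg'
  obtain ⟨F, F', _, k2⟩ := Aw_PPc hn K hb
  have c3 : C' * C = 1 := mul_eq_one_comm.1 c1
  refine ⟨C' * E * F, g, hg, ?_⟩
  have e' := congrArg (fun M => C' * (JJ n * M)) e
  simp only at e'
  calc JJ n * u * (zeps n ε)ᵀ = C' * C * JJ n * u * (zeps n ε)ᵀ := by rw [c3, Matrix.one_mul]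
    _ = C' * (C * JJ n) * u * (zeps n ε)ᵀ := by simp only [Matrix.mul_assoc]
    _ = C' * (JJ n * (a * u * (zeps n ε)ᵀ)) := by rw [← c2]; simp only [Matrix.mul_assoc]
    _ = C' * (JJ n * p) * (b * g) := by rw [e']; simp only [Matrix.mul_assoc]
    _ = C' * E * (JJ n * b) * g := by rw [f2]; simp only [Matrix.mul_assoc]
    _ = _ := by rw [k2]; simp only [Matrix.mul_assoc]

lemma len_wordD (n : ℕ) : (wordD n).length = Npar n := by
  have key : ∀ j, 2 * j ≤ n → ((List.range j).map (fun m =>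
    n :: (decRun (n - 2) (2 * m + 1) ++ decRun (n - 1) (2 * m + 2)))).flatten.length + 2 * j * j + j = 2 * j * n := by
    intro j
    induction j with
    | zero => simp
    | succ j ih =>
      intro h
      have := ih (by omega)
      rw [List.range_succ, List.map_append, List.flatten_append, List.length_append]
      simp only [List.map_cons, List.map_nil, List.flatten_cons, List.flatten_nil, List.append_nil,
        List.length_cons, List.length_append, decRun, List.length_reverse, List.length_range']
      obtain ⟨q, rfl⟩ : ∃ q, n = q + 2 * (j + 1) := ⟨n - 2 * (j + 1), by omega⟩
      have e1 : q + 2 * (j + 1) - 2 + 1 - (2 * j + 1) = q := by omega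
      have e2 : q + 2 * (j + 1) - 1 + 1 - (2 * j + 2) = q := by omega
      rw [e1, e2]
      simp only [decRun] at this
      nlinarith
  have := key (n / 2) (by omega)
  rw [← wordD] at this
  unfold Npar
  generalize (wordD n).length = L at *
  rcases Nat.even_or_odd' n with ⟨k, rfl | rfl⟩
  · rw [show 2 * k / 2 = k by omega] at this
    rcases k with _ | k
    · simpa using this
    · rw [show 2 * (k + 1) * (2 * (k + 1) - 1) = 2 * ((k + 1) * (2 * k + 1)) by
        rw [show 2 * (k + 1) - 1 = 2 * k + 1 by omega]; ring, Nat.mul_div_cancel_left _ two_pos]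
      nlinarith
  · rw [show (2 * k + 1) / 2 = k by omega] at this
    rw [show (2 * k + 1) * (2 * k + 1 - 1) = 2 * ((2 * k + 1) * k) by
      rw [show 2 * k + 1 - 1 = 2 * k by omega]; ring, Nat.mul_div_cancel_left _ two_pos]
    nlinarith

lemma conv1 {n : ℕ} (l : List ℕ) : ∀ t : ℕ → ℝ, (∀ i < l.length, 0 < t i) →
    ((List.range l.length).map (fun k => xMat n (l.getD k 0) (t k))).prod ∈ (l.map (Xp n)).prod := by
  induction l with
  | nil => intro t _; simp
  | cons i l ih =>
    intro t ht
    simp only [List.length_cons, List.range_succ_eq_map, List.map_cons, List.prod_cons, List.map_map]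
    refine Set.mul_mem_mul ⟨t 0, ht 0 (by simp), by simp⟩ ?_
    have := ih (fun k => t (k + 1)) (fun k hk => ht (k + 1) (by simpa using hk))
    simpa [Function.comp_def] using this

lemma conv2 {n : ℕ} (l : List ℕ) : ∀ g ∈ (l.map (Xp n)).prod, ∃ t : ℕ → ℝ, (∀ i, 0 < t i) ∧ 
    g = ((List.range l.length).map (fun k => xMat n (l.getD k 0) (t k))).prod := by
  induction l with
  | nil => intro g hg; exact ⟨fun _ => 1, fun _ => one_pos, by simpa using hg⟩
  | cons i l ih =>
    rw [List.map_cons, List.prod_cons]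
    rintro _ ⟨_, ⟨a, ha, rfl⟩, g, hg, rfl⟩
    obtain ⟨t, ht, rfl⟩ := ih g hg
    refine ⟨fun k => Nat.casesOn k a t, ?_, ?_⟩
    · rintro (_ | k)
      · exact ha
      · exact ht k
    · rw [List.length_cons, List.range_succ_eq_map, List.map_cons, List.prod_cons, List.map_map]
      simp [Function.comp_def]

lemma prodX_mem {n : ℕ} {t : ℕ → ℝ} (ht : ∀ i < Npar n, 0 < t i) :
    prodX n t ∈ ((wordD n).map (Xp n)).prod := by
  rw [prodX, ← len_wordD]
  rw [← len_wordD] at ht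
  exact conv1 _ t ht

lemma mem_prodX {n : ℕ} {g} (hg : g ∈ ((wordD n).map (Xp n)).prod) :
    ∃ t : ℕ → ℝ, (∀ i, 0 < t i) ∧ g = prodX n t := by
  obtain ⟨t, ht, e⟩ := conv2 _ g hg
  exact ⟨t, ht, by rw [e, prodX, len_wordD]⟩

lemma list_PPT {n : ℕ} (hn : 2 ≤ n) (w : List ℕ) (h : ∀ i ∈ w, 1 ≤ i ∧ i ≤ n) :
    ∀ g ∈ (w.map (Xp n)).prod, gᵀ ∈ PP n := by
  induction w with
  | nil => intro g hg; have : g = 1 := by simpa using hg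
           rw [this, Matrix.transpose_one]; exact PP_one n
  | cons i w ih =>
    rw [List.map_cons, List.prod_cons]
    rintro _ ⟨_, ⟨t, ht, rfl⟩, b, hb, rfl⟩
    simp only [Matrix.transpose_mul]
    exact PP_mul (ih (fun j hj => h j (by simp [hj])) b hb) (PP_y hn (h i (by simp)).1 (h i (by simp)).2 t)

lemma X1_eq (n : ℕ) (t : ℕ → ℝ) : X1 n t = JJ n * prodX n t * (JJ n)ᵀ := by
  ext p q; rw [mul_JJT, JJ_mul]; rfl

lemma X1_unit {n : ℕ} (hn : 2 ≤ n) {t : ℕ → ℝ} (ht : ∀ i < Npar n, 0 < t i) : IsUnit (X1 n t) := by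
  obtain ⟨C, C', h1, h2⟩ := list_PPT hn (wordD n) (fun i hi => mem_wordD n i hn hi) _ (prodX_mem ht)
  have e : X1 n t = Cᵀ := by
    rw [X1_eq, ← Matrix.transpose_transpose (prodX n t), ← Matrix.transpose_inj]
    simp only [Matrix.transpose_mul, Matrix.transpose_transpose]
    rw [← Matrix.mul_assoc, h2, Matrix.mul_assoc, JJ_JJT, Matrix.mul_one]
  rw [e, Matrix.isUnit_transpose]
  exact ⟨⟨C, C', h1, mul_eq_one_comm.1 h1⟩, rfl⟩

lemma JJ_prodX {n : ℕ} (hn : 2 ≤ n) {t : ℕ → ℝ} (ht : ∀ i < Npar n, 0 < t i) :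
    JJ n * prodX n t = X1 n t * IdA (Amat n t) := by
  have hu := (Matrix.isUnit_iff_isUnit_det _).1 (X1_unit hn ht)
  ext p q
  rcases lohi q with ⟨r, rfl⟩ | ⟨r, rfl⟩
  · rw [mul_IdA_lo, JJ_mul]; rfl
  · rw [mul_IdA_hi, JJ_mul, Amat, Matrix.mul_nonsing_inv_cancel_left _ _ hu]; rfl

lemma Y_of {n : ℕ} {A C C' A' : Matrix (Fin n) (Fin n) ℝ} {ε : ℝ} (h : IdA A * Zeps n ε = C * IdA A')
    (hC : C * C' = 1) : IsUnit (Y1 A ε) ∧ (Y1 A ε)⁻¹ * Y2 A ε = A' := by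
  have e1 : Y1 A ε = C := by
    ext p q; rw [← mul_IdA_lo C A' p q, ← h]; rfl
  have e2 : Y2 A ε = C * A' := by
    ext p q; rw [← mul_IdA_hi C A' p q, ← h]; rfl
  have hu : IsUnit C := ⟨⟨C, C', hC, mul_eq_one_comm.1 hC⟩, rfl⟩
  rw [e1, e2]
  exact ⟨hu, Matrix.nonsing_inv_mul_cancel_left _ _ ((Matrix.isUnit_iff_isUnit_det _).1 hu)⟩

lemma x_cont {n i : ℕ} (hn : 2 ≤ n) (h1 : 1 ≤ i) (h2 : i ≤ n) : Continuous (xMat n i) := by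
  have : xMat n i = fun t => 1 + t • NN n i := by ext1 t; exact xMat_eq hn h1 h2 t
  rw [this]; fun_prop

lemma Xc_compact {n : ℕ} (hn : 2 ≤ n) (K : ℝ) (w : List ℕ) (h : ∀ i ∈ w, 1 ≤ i ∧ i ≤ n) :
    IsCompact (w.map (Xc n K)).prod := by
  induction w with
  | nil => simp only [List.map_nil, List.prod_nil]; exact isCompact_singleton
  | cons i w ih =>
    rw [List.map_cons, List.prod_cons]
    refine IsCompact.mul ?_ (ih fun j hj => h j (by simp [hj]))
    have : Xc n K i = xMat n i '' Set.Icc 0 K := by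
      ext g; constructor
      · rintro ⟨t, ht, rfl⟩; exact ⟨t, ht, rfl⟩
      · rintro ⟨t, ht, rfl⟩; exact ⟨t, ht, rfl⟩
    rw [this]
    exact isCompact_Icc.image (x_cont hn (h i (by simp)).1 (h i (by simp)).2)

lemma Xc_absorb {n : ℕ} (hn : 2 ≤ n) (K : ℝ) (w : List ℕ) (h : ∀ i ∈ w, 1 ≤ i ∧ i ≤ n) :
    ∀ g ∈ (w.map (Xc n K)).prod, ∀ x ∈ ((wordFull n).map (Xp n)).prod,
      g * x ∈ ((wordFull n).map (Xp n)).prod := by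
  induction w with
  | nil => intro g hg x hx
           have : g = 1 := by simpa using hg
           rwa [this, one_mul]
  | cons i w ih =>
    rw [List.map_cons, List.prod_cons]
    rintro _ ⟨_, ⟨t, ht, rfl⟩, b, hb, rfl⟩ x hx
    have h1 := ih (fun j hj => h j (by simp [hj])) b hb x hx
    obtain ⟨hi1, hi2⟩ := h i (by simp)
    simp only [mul_assoc]
    rcases ht.1.eq_or_lt with h0 | h0
    · rwa [← h0, x_zero hn hi1 hi2, one_mul]
    · rw [← full_left (Xp_hecke hn) hn i hi1 hi2]
      exact Set.mul_mem_mul ⟨t, h0, rfl⟩ h1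

lemma IdA_cont (n : ℕ) : Continuous (IdA : Matrix (Fin n) (Fin n) ℝ → _) := by
  refine continuous_matrix fun p q => ?_
  simp only [IdA, Matrix.of_apply]
  split_ifs
  · exact continuous_const
  · exact continuous_const
  · exact continuous_id.matrix_elem _ _

lemma key_closed {n : ℕ} (hn : 2 ≤ n) {ε : ℝ} (hε : 0 < ε) {A : Matrix (Fin n) (Fin n) ℝ}
    (hA : A ∈ closure (Spos n)) : ∃ K : ℝ, ∃ D D' : Matrix (Fin n) (Fin n) ℝ,
      ∃ g ∈ ((wordD n).map (Xc n K)).prod, D * D' = 1 ∧ IdA A * (zeps n ε)ᵀ = D * JJ n * g := by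
  obtain ⟨K, H⟩ := bound2 hn ε hε
  have hw := fun i hi => mem_wordD n i hn hi
  have hGu : ∀ g ∈ ((wordD n).map (Xc n K)).prod, IsUnit g := list_unit _ _ (by
    rintro i hi _ ⟨t, _, rfl⟩; exact x_unit hn (hw i hi).1 (hw i hi).2 t)
  set G := ((wordD n).map (Xc n K)).prod with hG
  have hGc : IsCompact G := Xc_compact hn K _ hw
  have : CompactSpace G := isCompact_iff_compactSpace.1 hGc
  let E : Matrix (Fin n) (Fin n) ℝ → Matrix (Fin (2 * n)) (Fin (2 * n)) ℝ → Matrix (Fin n) (Fin (2 * n)) ℝ :=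
    fun A g => IdA A * (zeps n ε)ᵀ * g.adjugate * (1 - (JJ n)ᵀ * JJ n)
  have hE : Continuous fun x : G × Matrix (Fin n) (Fin n) ℝ => E x.2 x.1 := by
    have h1 : Continuous fun x : G × Matrix (Fin n) (Fin n) ℝ => IdA x.2 := (IdA_cont n).comp continuous_snd
    have h2 : Continuous fun x : G × Matrix (Fin n) (Fin n) ℝ => (x.1 : Matrix (Fin (2 * n)) (Fin (2 * n)) ℝ).adjugate :=
      (continuous_subtype_val.comp continuous_fst).matrix_adjugate
    exact ((h1.matrix_mul continuous_const).matrix_mul h2).matrix_mul continuous_const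
  have hT : IsClosed (Prod.snd '' {x : G × Matrix (Fin n) (Fin n) ℝ | E x.2 x.1 = 0}) :=
    isClosedMap_snd_of_compactSpace _ (isClosed_eq hE continuous_const)
  have hsub : Spos n ⊆ Prod.snd '' {x : G × Matrix (Fin n) (Fin n) ℝ | E x.2 x.1 = 0} := by
    rintro _ ⟨t, ht, rfl⟩
    obtain ⟨D, g, hg, e⟩ := H _ (prodX_mem ht)
    refine ⟨(⟨g, hg⟩, Amat n t), ?_, rfl⟩
    have hu := (Matrix.isUnit_iff_isUnit_det _).1 (X1_unit hn ht)
    have e1 : IdA (Amat n t) * (zeps n ε)ᵀ = (X1 n t)⁻¹ * D * JJ n * g := by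
      rw [JJ_prodX hn ht] at e
      calc _ = (X1 n t)⁻¹ * (X1 n t * IdA (Amat n t) * (zeps n ε)ᵀ) := by
            rw [Matrix.mul_assoc (X1 n t), Matrix.nonsing_inv_mul_cancel_left _ _ hu]
        _ = _ := by rw [e]; simp only [Matrix.mul_assoc]
    have e2 : JJ n * (1 - (JJ n)ᵀ * JJ n) = 0 := by
      rw [Matrix.mul_sub, ← Matrix.mul_assoc, JJ_JJT]; simp
    change IdA (Amat n t) * (zeps n ε)ᵀ * g.adjugate * (1 - (JJ n)ᵀ * JJ n) = 0
    rw [e1, Matrix.mul_assoc _ g, Matrix.mul_adjugate, Matrix.mul_smul, Matrix.mul_one, Matrix.smul_mul,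
      Matrix.mul_assoc, e2]
    simp
  obtain ⟨⟨⟨g, hg⟩, A'⟩, hx, rfl⟩ := closure_minimal hsub hT hA
  change IdA A' * (zeps n ε)ᵀ * g.adjugate * (1 - (JJ n)ᵀ * JJ n) = 0 at hx
  rw [Matrix.mul_sub, Matrix.mul_one, sub_eq_zero, ← Matrix.mul_assoc] at hx
  have hdet : g.det ≠ 0 := ((Matrix.isUnit_iff_isUnit_det _).1 (hGu g hg)).ne_zero
  set D0 := IdA A' * (zeps n ε)ᵀ * g.adjugate * (JJ n)ᵀ with hD0
  have e3 : IdA A' * (zeps n ε)ᵀ = (g.det⁻¹ • D0) * JJ n * g := by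
    have := congrArg (fun M => g.det⁻¹ • (M * g)) hx
    simp only [Matrix.mul_assoc _ g.adjugate, Matrix.adjugate_mul] at this
    rw [Matrix.mul_smul, Matrix.mul_one, smul_smul, inv_mul_cancel₀ hdet, one_smul] at this
    rw [this, Matrix.smul_mul, Matrix.smul_mul]
  have hz : IsUnit (zeps n ε)ᵀ := by
    rw [Matrix.isUnit_transpose]
    refine list_unit (Xp n) (wordFull n) ?_ _ (list_mem _ _ _ fun i => ⟨ε, hε, rfl⟩)
    rintro i hi _ ⟨t, _, rfl⟩
    exact x_unit hn (mem_wordFull n i hn hi).1 (mem_wordFull n i hn hi).2 t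
  have hz' := Matrix.mul_nonsing_inv _ ((Matrix.isUnit_iff_isUnit_det _).1 hz)
  refine ⟨K, g.det⁻¹ • D0, JJ n * g * ((zeps n ε)ᵀ)⁻¹ * (JJ n)ᵀ, g, hg, ?_, e3⟩
  calc _ = (g.det⁻¹ • D0) * JJ n * g * ((zeps n ε)ᵀ)⁻¹ * (JJ n)ᵀ := by simp only [Matrix.mul_assoc]
    _ = IdA A' * ((zeps n ε)ᵀ * ((zeps n ε)ᵀ)⁻¹) * (JJ n)ᵀ := by rw [← e3]; simp only [Matrix.mul_assoc]
    _ = 1 := by rw [hz', Matrix.mul_one, IdA_JJT]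

lemma fwd {n : ℕ} (hn : 2 ≤ n) {ε : ℝ} (hε : 0 < ε) {A : Matrix (Fin n) (Fin n) ℝ}
    (hA : A ∈ closure (Spos n)) : IsUnit (Y1 A ε) ∧ (Y1 A ε)⁻¹ * Y2 A ε ∈ Spos n := by
  obtain ⟨K, D, D', g, hg, hD, e⟩ := key_closed hn hε hA
  have hz : zeps n ε ∈ ((wordFull n).map (Xp n)).prod := list_mem _ _ _ fun i => ⟨ε, hε, rfl⟩
  have hgz := Xc_absorb hn K _ (fun i hi => mem_wordD n i hn hi) g hg _ hz
  rw [wordFull_eq, List.map_append, List.prod_append] at hgz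
  obtain ⟨a, ha, u, hu, e1⟩ := hgz
  simp only at e1
  obtain ⟨C, C', hC, hC2⟩ := Aw_PPp hn ha
  obtain ⟨t, ht, rfl⟩ := mem_prodX hu
  have ht' : ∀ i < Npar n, 0 < t i := fun i _ => ht i
  have hX := Matrix.mul_nonsing_inv _ ((Matrix.isUnit_iff_isUnit_det _).1 (X1_unit hn ht'))
  obtain ⟨h1, h2⟩ := Y_of (A := A) (ε := ε) (C := D * C * X1 n t) (C' := (X1 n t)⁻¹ * C' * D') (A' := Amat n t) (by
    calc IdA A * Zeps n ε = IdA A * (zeps n ε)ᵀ * zeps n ε := by rw [Zeps, Matrix.mul_assoc]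
      _ = D * JJ n * (g * zeps n ε) := by rw [e]; simp only [Matrix.mul_assoc]
      _ = D * (JJ n * a) * prodX n t := by rw [← e1]; simp only [Matrix.mul_assoc]
      _ = D * C * (JJ n * prodX n t) := by rw [hC2]; simp only [Matrix.mul_assoc]
      _ = _ := by rw [JJ_prodX hn ht']; simp only [Matrix.mul_assoc]) (by
    calc _ = D * (C * (X1 n t * (X1 n t)⁻¹) * C') * D' := by simp only [Matrix.mul_assoc]
      _ = 1 := by rw [hX, Matrix.mul_one, hC, Matrix.mul_one, hD])
  exact ⟨h1, t, ht', h2⟩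

lemma zeps_cont {n : ℕ} (hn : 2 ≤ n) : Continuous (zeps n) := by
  unfold zeps
  apply continuous_list_prod
  intro i hi
  exact x_cont hn (mem_wordFull n i hn hi).1 (mem_wordFull n i hn hi).2

lemma zeps_zero {n : ℕ} (hn : 2 ≤ n) : zeps n 0 = 1 := by
  unfold zeps
  apply List.prod_eq_one
  intro x hx
  obtain ⟨i, hi, rfl⟩ := List.mem_map.1 hx
  exact x_zero hn (mem_wordFull n i hn hi).1 (mem_wordFull n i hn hi).2

lemma bwd {n : ℕ} (hn : 2 ≤ n) (A : Matrix (Fin n) (Fin n) ℝ) :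
    Filter.Tendsto (fun ε => (Y1 A ε)⁻¹ * Y2 A ε) (nhds 0) (nhds A) := by
  have hZ : Continuous fun ε => IdA A * Zeps n ε := by
    unfold Zeps
    exact continuous_const.matrix_mul ((zeps_cont hn).matrix_transpose.matrix_mul (zeps_cont hn))
  have hZ0 : IdA A * Zeps n 0 = IdA A := by
    rw [Zeps, zeps_zero hn]; simp
  have c1 : Continuous fun ε => Y1 A ε := continuous_matrix fun p q => hZ.matrix_elem _ _
  have c2 : Continuous fun ε => Y2 A ε := continuous_matrix fun p q => hZ.matrix_elem _ _
  have z1 : Y1 A 0 = 1 := by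
    ext p q
    rw [← mul_IdA_lo 1 A p q, Matrix.one_mul, ← hZ0]; rfl
  have z2 : Y2 A 0 = A := by
    ext p q
    conv_rhs => rw [← Matrix.one_mul A]
    rw [← mul_IdA_hi 1 A p q, Matrix.one_mul, ← hZ0]; rfl
  have c3 : ContinuousAt (fun ε => (Y1 A ε)⁻¹ * Y2 A ε) 0 := by
    simp only [Matrix.inv_def, Ring.inverse_eq_inv']
    have h : ContinuousAt (fun ε => ((Y1 A ε).det)⁻¹) 0 :=
      (c1.matrix_det.continuousAt).inv₀ (by rw [z1]; simp)
    have h2 := h.smul c1.matrix_adjugate.continuousAt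
    exact h2.mul c2.continuousAt
  have := c3.tendsto
  simpa only [z1, z2, inv_one, Matrix.one_mul] using this

end finSec

/-- `A` is totally nonnegative (lies in the closure of `S_n^{>0}`) iff
for all sufficiently small `ε > 0`, with `[Y₁(ε)|Y₂(ε)] = [Id_n|A]·Z(ε)`, the matrix
`Y₁(ε)` is invertible and `Y₁(ε)⁻¹·Y₂(ε) ∈ S_n^{>0}`. -/
theorem mem_closure_Spos_iff (n : ℕ) (hn : 2 ≤ n)
    (A : Matrix (Fin n) (Fin n) ℝ) (hA : Aᵀ = -A) :
    A ∈ closure (Spos n) ↔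
      ∃ ε₀ > (0 : ℝ), ∀ ε : ℝ, 0 < ε → ε < ε₀ →
        IsUnit (Y1 A ε) ∧ (Y1 A ε)⁻¹ * Y2 A ε ∈ Spos n := by
  constructor
  · intro h
    exact ⟨1, one_pos, fun ε hε _ => fwd hn hε h⟩
  · rintro ⟨ε₀, h0, h⟩
    refine mem_closure_of_tendsto ((bwd hn A).mono_left (nhdsWithin_le_nhds (s := Set.Ioi 0))) ?_
    filter_upwards [Ioo_mem_nhdsGT h0] with ε hε
    exact (h ε hε.1 hε.2).2
end
end

section
/- If t_1,…,t_N are strictly positive real numbers, then M_{j,k}(A(t)) > 0 for all integers 1 ≤ j ≤ k ≤ n−1. -/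
noncomputable section

open Matrix

/-- row operation -/
def rowop (i : ℕ) (t : ℝ) (Q : ℕ → ℕ → ℝ) : ℕ → ℕ → ℝ :=
  fun a b => if a = i then Q i b + t * Q (i+1) b else Q a b

def minorQ {c : ℕ} (Q : ℕ → ℕ → ℝ) (σ : Fin c → ℕ) (r : Fin c → ℕ) : ℝ :=
  Matrix.det (Matrix.of fun p q : Fin c => Q (r p) (σ q))

lemma minorQ_rowop_not {c : ℕ} (Q : ℕ → ℕ → ℝ) (σ r : Fin c → ℕ) (i : ℕ) (t : ℝ)
    (h : ∀ p, r p ≠ i) : minorQ (rowop i t Q) σ r = minorQ Q σ r := by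
  unfold minorQ
  congr 1
  ext p q
  simp [rowop, h p]

lemma minorQ_rowop_mem {c : ℕ} (Q : ℕ → ℕ → ℝ) (σ r : Fin c → ℕ) (hr : StrictMono r) (i : ℕ) (t : ℝ)
    (k : Fin c) (h : r k = i) :
    minorQ (rowop i t Q) σ r = minorQ Q σ r + t * minorQ Q σ (Function.update r k (i+1)) := by
  unfold minorQ
  have h1 : (Matrix.of fun p q : Fin c => rowop i t Q (r p) (σ q)) =
      (Matrix.of fun p q : Fin c => Q (r p) (σ q)).updateRow k
        ((fun q => Q i (σ q)) + t • (fun q => Q (i+1) (σ q))) := by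
    ext p q
    by_cases hp : p = k
    · subst hp; simp [rowop, h]
    · have : r p ≠ i := fun e => hp (hr.injective (e.trans h.symm))
      simp [rowop, hp, this]
  rw [h1, Matrix.det_updateRow_add, Matrix.det_updateRow_smul]
  congr 2
  · ext p q
    by_cases hp : p = k
    · subst hp; simp [h]
    · simp [hp]
  · congr 1
    ext p q
    by_cases hp : p = k
    · subst hp; simp
    · simp [hp]

lemma minorQ_dup {c : ℕ} (Q : ℕ → ℕ → ℝ) (σ r : Fin c → ℕ) (k l : Fin c) (hkl : k ≠ l)
    (h : r k = r l) : minorQ Q σ r = 0 := by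
  unfold minorQ
  apply Matrix.det_zero_of_row_eq hkl
  ext q
  simp [h]

lemma strictMono_upd {c : ℕ} (r : Fin c → ℕ) (hr : StrictMono r) (k : Fin c)
    (h : ∀ l, r l ≠ r k + 1) : StrictMono (Function.update r k (r k + 1)) := by
  intro x y hxy
  have h1 := hr hxy
  by_cases hx : x = k
  · subst hx
    have hy : y ≠ x := hxy.ne'
    have := h y
    simp [hy]; omega
  · by_cases hy : y = k
    · subst hy; simp [hx]; omega
    · simpa [hx, hy] using h1

def PosM {c : ℕ} (Q : ℕ → ℕ → ℝ) (σ : Fin c → ℕ) (L N : ℕ) : Prop :=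
  ∀ r : Fin c → ℕ, StrictMono r → (∀ p, r p < N) → (∀ p : Fin c, (p:ℕ) + 1 = c → L ≤ r p) →
    0 < minorQ Q σ r

/-- effect of a rowop on minors -/
lemma rowop_cases {c : ℕ} (Q : ℕ → ℕ → ℝ) (σ r : Fin c → ℕ) (hr : StrictMono r) (i : ℕ) (t : ℝ) :
    (minorQ (rowop i t Q) σ r = minorQ Q σ r ∧ ∀ k, r k = i → ∃ l, r l = i + 1) ∨
    ∃ k, r k = i ∧ StrictMono (Function.update r k (i+1)) ∧
    minorQ (rowop i t Q) σ r = minorQ Q σ r + t * minorQ Q σ (Function.update r k (i+1)) := by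
  by_cases h : ∃ k, r k = i
  · obtain ⟨k, hk⟩ := h
    have h1 := minorQ_rowop_mem Q σ r hr i t k hk
    by_cases h2 : ∃ l, r l = i + 1
    · left
      obtain ⟨l, hl⟩ := h2
      have hlk : l ≠ k := by rintro rfl; omega
      refine ⟨?_, fun _ _ => ⟨l, hl⟩⟩
      rw [h1, minorQ_dup Q σ (Function.update r k (i+1)) k l hlk.symm (by simp [hlk, hl])]
      simp
    · right
      refine ⟨k, hk, ?_, h1⟩
      push Not at h2
      subst hk
      exact strictMono_upd r hr k h2
  · left
    push Not at h
    exact ⟨minorQ_rowop_not Q σ r i t h, fun k hk => absurd hk (h k)⟩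

lemma PosM_rowop {c : ℕ} (Q : ℕ → ℕ → ℝ) (σ : Fin c → ℕ) (L N i : ℕ) (t : ℝ) (ht : 0 < t)
    (hi : i + 1 < N) (H : PosM Q σ L N) : PosM (rowop i t Q) σ L N := by
  intro r hr hN hL
  rcases rowop_cases Q σ r hr i t with ⟨h, h3⟩ | ⟨k, hk, hm, h⟩
  · rw [h]; exact H r hr hN hL
  · rw [h]
    have h1 := H r hr hN hL
    have h2 := H _ hm (by
      intro p
      by_cases hp : p = k
      · subst hp; simpa using hi
      · simpa [hp] using hN p) (by
      intro p hpc
      have := hL p hpc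
      by_cases hp : p = k
      · subst hp; simp; omega
      · simpa [hp] using this)
    positivity

lemma PosM_mono {c : ℕ} {Q : ℕ → ℕ → ℝ} {σ : Fin c → ℕ} {L L' N N' : ℕ} (hL : L ≤ L') (hN : N' ≤ N)
    (H : PosM Q σ L N) : PosM Q σ L' N' := fun r hr h1 h2 =>
  H r hr (fun p => (h1 p).trans_le hN) (fun p hp => hL.trans (h2 p hp))

/-- state during a run -/
def RunSt {c : ℕ} (Q : ℕ → ℕ → ℝ) (σ : Fin (c+1) → ℕ) (l p : ℕ) : Prop :=
  ∀ r : Fin (c+1) → ℕ, StrictMono r → (∀ x, r x ≤ p) →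
    0 ≤ minorQ Q σ r ∧ (l ≤ r (Fin.last c) → 0 < minorQ Q σ r)

lemma RunSt_base {c : ℕ} (Q : ℕ → ℕ → ℝ) (σ : Fin c → ℕ) (p q0 : ℕ) (τ : ℝ) (hτ : 0 < τ)
    (H : PosM Q σ 0 p) (h0 : ∀ a < p, Q a q0 = 0) (h1 : Q p q0 = τ) :
    RunSt Q (Fin.snoc σ q0 : Fin (c+1) → ℕ) p p := by
  intro r hr hp
  have key : minorQ Q (Fin.snoc σ q0 : Fin (c+1) → ℕ) r =
      Q (r (Fin.last c)) q0 * minorQ Q σ (fun x => r x.castSucc) := by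
    unfold minorQ
    rw [Matrix.det_succ_column _ (Fin.last c), Finset.sum_eq_single (Fin.last c)]
    · simp only [Fin.succAbove_last, Matrix.of_apply, Fin.snoc_last, Fin.val_last]
      rw [Even.neg_one_pow (by simp), one_mul]
      congr 2
      ext x y
      simp
    · intro b _ hb
      have : r b < p := (hr (Fin.lt_last_iff_ne_last.2 hb)).trans_le (hp _)
      simp [h0 _ this]
    · simp
  rw [key]
  have hm : 0 < minorQ Q σ (fun x => r x.castSucc) :=
    H _ (fun x y hxy => hr (by simpa using hxy))
      (fun x => (hr (Fin.castSucc_lt_last x)).trans_le (hp _)) (fun _ _ => Nat.zero_le _)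
  rcases (hp (Fin.last c)).lt_or_eq with h | h
  · rw [h0 _ h]
    simp; omega
  · rw [h, h1]
    exact ⟨by positivity, fun _ => by positivity⟩

lemma RunSt_step {c : ℕ} (Q : ℕ → ℕ → ℝ) (σ : Fin (c+1) → ℕ) (l p : ℕ) (t : ℝ) (ht : 0 < t)
    (hl : l + 1 ≤ p) (H : RunSt Q σ (l+1) p) : RunSt (rowop l t Q) σ l p := by
  intro r hr hp
  have h1 := H r hr hp
  rcases rowop_cases Q σ r hr l t with ⟨h, h3⟩ | ⟨k, hk, hm, h⟩
  · rw [h]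
    refine ⟨h1.1, fun hl' => ?_⟩
    rcases hl'.lt_or_eq with h' | h'
    · exact h1.2 h'
    · exfalso
      obtain ⟨x, hx⟩ := h3 _ h'.symm
      have := hr.monotone (Fin.le_last x)
      omega
  · rw [h]
    have h2 := H _ hm (by
      intro x
      by_cases hx : x = k
      · subst hx; simpa using hl
      · simpa [hx] using hp x)
    refine ⟨by have := h1.1; have := h2.1; positivity, fun hl' => ?_⟩
    rcases hl'.lt_or_eq with h' | h'
    · have := h1.2 h'
      have := h2.1
      positivity
    · have hk' : k = Fin.last c := hr.injective (by omega)
      have := h2.2 (by subst hk'; simp)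
      have := h1.1
      positivity

lemma RunSt.toPos {c : ℕ} {Q : ℕ → ℕ → ℝ} {σ : Fin (c+1) → ℕ} {l p : ℕ} (H : RunSt Q σ l p) :
    PosM Q σ l (p+1) := fun r hr h1 h2 =>
  (H r hr (fun x => Nat.lt_succ_iff.1 (h1 x))).2 (h2 _ (by simp))

lemma PosM_low {c : ℕ} {Q : ℕ → ℕ → ℝ} {σ : Fin (c+1) → ℕ} {l N : ℕ} (hl : l ≤ c)
    (H : PosM Q σ l N) : PosM Q σ 0 N := by
  intro r hr h1 _
  refine H r hr h1 (fun x hx => ?_)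
  have : ∀ y : Fin (c+1), (y:ℕ) ≤ r y := by
    intro y
    induction y using Fin.induction with
    | zero => simp
    | succ y ih =>
      have := hr (Fin.castSucc_lt_succ (i := y))
      simp at ih ⊢
      omega
  have := this x
  omega

/-- apply the row operations of a list of (1-based) indices -/
def runQ (ps : List (ℕ × ℝ)) (Q : ℕ → ℕ → ℝ) : ℕ → ℕ → ℝ :=
  ps.foldl (fun Q p => rowop (p.1 - 1) p.2 Q) Q

lemma runQ_inv (P : (ℕ → ℕ → ℝ) → Prop) (ps : List (ℕ × ℝ)) 
    (hs : ∀ x ∈ ps, ∀ Q, P Q → P (rowop (x.1 - 1) x.2 Q)) (Q : ℕ → ℕ → ℝ) (hQ : P Q) :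
    P (runQ ps Q) := by
  unfold runQ
  induction ps generalizing Q with
  | nil => exact hQ
  | cons a l ih =>
    simp only [List.foldl_cons]
    exact ih (fun x hx => hs x (by simp [hx])) _ (hs a (by simp) Q hQ)

lemma decRun_snoc (a b : ℕ) (h : b ≤ a) : decRun a b = decRun a (b+1) ++ [b] := by
  unfold decRun
  have : a + 1 - b = (a + 1 - (b+1)) + 1 := by omega
  rw [this, List.range'_succ]
  simp

lemma decRun_nil (a b : ℕ) (h : a < b) : decRun a b = [] := by
  unfold decRun
  have : a + 1 - b = 0 := by omega
  simp [this]

lemma mem_decRun (a b x : ℕ) : x ∈ decRun a b ↔ b ≤ x ∧ x ≤ a := by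
  unfold decRun
  simp [List.mem_range'_1]
  omega

lemma RunSt_run {c : ℕ} (Q : ℕ → ℕ → ℝ) (σ : Fin (c+1) → ℕ) (p : ℕ)
    (H : RunSt Q σ p p) (d : ℕ) : ∀ (b : ℕ) (_ : 1 ≤ b) (_ : b + d = p + 1) (ps : List (ℕ × ℝ))
      (_ : ps.map Prod.fst = decRun p b) (_ : ∀ x ∈ ps, 0 < x.2), RunSt (runQ ps Q) σ (b-1) p := by
  induction d with
  | zero =>
    intro b hb hbd ps hps _
    rw [decRun_nil _ _ (by omega)] at hps
    have : ps = [] := by simpa using hps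
    subst this
    have : b - 1 = p := by omega
    rw [this]; exact H
  | succ d ih =>
    intro b hb hbd ps hps hpos
    rw [decRun_snoc _ _ (by omega), List.map_eq_append_iff] at hps
    obtain ⟨l1, l2, rfl, h1, h2⟩ := hps
    have h3 := ih (b+1) (by omega) (by omega) l1 h1 (fun x hx => hpos x (by simp [hx]))
    obtain ⟨x, hx, hxb⟩ : ∃ x, l2 = [x] ∧ x.1 = b := by
      rw [List.map_eq_singleton_iff] at h2
      simpa using h2
    subst hx
    have : runQ (l1 ++ [x]) Q = rowop (b-1) x.2 (runQ l1 Q) := by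
      simp [runQ, hxb]
    rw [this]
    apply RunSt_step _ _ _ _ _ (hpos x (by simp)) (by omega)
    have : b - 1 + 1 = b + 1 - 1 := by omega
    rw [this]; exact h3

/-- selected columns -/
def sel (c : ℕ) (x : Fin c) : ℕ := if (x:ℕ) % 2 = 0 ∧ (x:ℕ) + 1 = c then (x:ℕ) + 1 else x

structure QInv (n m : ℕ) (Q : ℕ → ℕ → ℝ) : Prop where
  nonneg : ∀ a b, 0 ≤ Q a b
  lt : ∀ a b, a < b → Q a b = 0
  zero : ∀ a b, 2 * m ≤ b → Q a b = 0
  full : PosM Q (fun x : Fin (2*m) => (x:ℕ)) 0 n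
  sub : ∀ c ≤ 2 * m, PosM Q (sel c) c n

lemma nonneg_rowop {Q : ℕ → ℕ → ℝ} {i : ℕ} {t : ℝ} (ht : 0 < t) (h : ∀ a b, 0 ≤ Q a b) :
    ∀ a b, 0 ≤ rowop i t Q a b := by
  intro a b
  unfold rowop
  split_ifs
  · have := h i b; have := h (i+1) b; positivity
  · exact h a b

lemma lt_rowop {Q : ℕ → ℕ → ℝ} {i : ℕ} {t : ℝ} (h : ∀ a b, a < b → Q a b = 0)
    (h1 : Q (i+1) (i+1) = 0) :
    ∀ a b, a < b → rowop i t Q a b = 0 := by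
  intro a b hab
  unfold rowop
  split_ifs with hh
  · subst hh
    rw [h a b hab]
    rcases Nat.lt_or_ge (a+1) b with h' | h'
    · rw [h _ _ h']; simp
    · have : b = a + 1 := by omega
      subst this; simp [h1]
  · exact h a b hab

lemma zero_rowop {Q : ℕ → ℕ → ℝ} {i k : ℕ} {t : ℝ} (h : ∀ a b, k ≤ b → Q a b = 0) :
    ∀ a b, k ≤ b → rowop i t Q a b = 0 := by
  intro a b hab
  unfold rowop
  split_ifs <;> simp [h _ b hab]

def addCols (n m : ℕ) (t : ℝ) (Q : ℕ → ℕ → ℝ) : ℕ → ℕ → ℝ := fun a b =>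
  if b = 2 * m then (if a = n - 2 then t else 0)
  else if b = 2 * m + 1 then (if a = n - 1 then 1 else 0) else Q a b

lemma minorQ_congr {c : ℕ} {Q Q' : ℕ → ℕ → ℝ} {σ : Fin c → ℕ} (h : ∀ a q, Q a (σ q) = Q' a (σ q))
    (r : Fin c → ℕ) : minorQ Q σ r = minorQ Q' σ r := by
  unfold minorQ
  congr 1
  ext p q
  simp [h]

lemma PosM_congr {c : ℕ} {Q Q' : ℕ → ℕ → ℝ} {σ : Fin c → ℕ} {L N : ℕ} 
    (h : ∀ a q, Q a (σ q) = Q' a (σ q)) (H : PosM Q σ L N) : PosM Q' σ L N := by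
  intro r h1 h2 h3
  rw [← minorQ_congr h]
  exact H r h1 h2 h3

lemma block_inv (n m : ℕ) (hm : 2 * m + 2 ≤ n) (Q : ℕ → ℕ → ℝ) (H : QInv n m Q) (t : ℝ) (ht : 0 < t)
    (p1 p2 : List (ℕ × ℝ)) (h1 : p1.map Prod.fst = decRun (n-2) (2*m+1))
    (h2 : p2.map Prod.fst = decRun (n-1) (2*m+2)) (hp1 : ∀ x ∈ p1, 0 < x.2)
    (hp2 : ∀ x ∈ p2, 0 < x.2) :
    QInv n (m+1) (runQ p2 (runQ p1 (addCols n m t Q))) := by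
  have hx1 : ∀ x ∈ p1, 2 * m + 1 ≤ x.1 ∧ x.1 ≤ n - 2 := by
    intro x hx
    rw [← mem_decRun, ← h1]
    exact List.mem_map_of_mem hx
  have hx2 : ∀ x ∈ p2, 2 * m + 2 ≤ x.1 ∧ x.1 ≤ n - 1 := by
    intro x hx
    rw [← mem_decRun, ← h2]
    exact List.mem_map_of_mem hx
  set Q0 := addCols n m t Q with hQ0
  set Q1 := runQ p1 Q0 with hQ1
  set Q2 := runQ p2 Q1 with hQ2
  -- nonneg
  have nn0 : ∀ a b, 0 ≤ Q0 a b := by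
    intro a b
    simp only [hQ0, addCols]
    have := H.nonneg a b
    split_ifs <;> first | positivity | exact this
  have nn1 : ∀ a b, 0 ≤ Q1 a b :=
    runQ_inv (fun Q => ∀ a b, 0 ≤ Q a b) p1 (fun x hx Q hQ => nonneg_rowop (hp1 x hx) hQ) _ nn0
  have nn2 : ∀ a b, 0 ≤ Q2 a b :=
    runQ_inv (fun Q => ∀ a b, 0 ≤ Q a b) p2 (fun x hx Q hQ => nonneg_rowop (hp2 x hx) hQ) _ nn1
  -- zero columns
  have z0 : ∀ a b, 2 * (m+1) ≤ b → Q0 a b = 0 := by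
    intro a b hb
    simp only [hQ0, addCols]
    rw [if_neg (by omega), if_neg (by omega)]
    exact H.zero a b (by omega)
  have z1 : ∀ a b, 2 * (m+1) ≤ b → Q1 a b = 0 :=
    runQ_inv (fun Q => ∀ a b, 2 * (m+1) ≤ b → Q a b = 0) p1 (fun x hx Q hQ => zero_rowop hQ) _ z0
  have z2 : ∀ a b, 2 * (m+1) ≤ b → Q2 a b = 0 :=
    runQ_inv (fun Q => ∀ a b, 2 * (m+1) ≤ b → Q a b = 0) p2 (fun x hx Q hQ => zero_rowop hQ) _ z1
  -- last column in run 1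
  have c0 : (∀ a < n - 1, Q0 a (2*m+1) = 0) ∧ Q0 (n-1) (2*m+1) = 1 := by
    constructor
    · intro a ha
      simp only [hQ0, addCols]
      rw [if_neg (by omega), if_pos trivial, if_neg (by omega)]
    · simp [hQ0, addCols]
  have c1' : (∀ a b, 2 * (m+1) ≤ b → Q1 a b = 0) ∧
      ((∀ a < n - 1, Q1 a (2*m+1) = 0) ∧ Q1 (n-1) (2*m+1) = 1) ∧ (∀ a b, a < b → Q1 a b = 0) := by
    apply runQ_inv (fun Q => (∀ a b, 2 * (m+1) ≤ b → Q a b = 0) ∧ 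
        ((∀ a < n - 1, Q a (2*m+1) = 0) ∧ Q (n-1) (2*m+1) = 1) ∧ (∀ a b, a < b → Q a b = 0)) p1
    · intro x hx Q hQ
      have hb := hx1 x hx
      refine ⟨zero_rowop hQ.1, ⟨?_, ?_⟩, ?_⟩
      · intro a ha
        unfold rowop
        split_ifs
        · rw [hQ.2.1.1 _ (by omega), hQ.2.1.1 _ (by omega)]; simp
        · exact hQ.2.1.1 a ha
      · unfold rowop
        rw [if_neg (by omega)]
        exact hQ.2.1.2
      · apply lt_rowop hQ.2.2
        rcases Nat.lt_or_ge (2*m+1) (x.1 - 1 + 1) with h | h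
        · exact hQ.1 _ _ (by omega)
        · have : x.1 - 1 + 1 = 2 * m + 1 := by omega
          rw [this]
          exact hQ.2.1.1 _ (by omega)
    · refine ⟨z0, c0, ?_⟩
      intro a b hab
      simp only [hQ0, addCols]
      split_ifs <;> first | omega | rfl | exact H.lt a b hab
  obtain ⟨-, c1, l1⟩ := c1'
  have l2 : (∀ a b, 2 * (m+1) ≤ b → Q2 a b = 0) ∧ ∀ a b, a < b → Q2 a b = 0 := by
    apply runQ_inv (fun Q => (∀ a b, 2 * (m+1) ≤ b → Q a b = 0) ∧ ∀ a b, a < b → Q a b = 0) p2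
    · intro x hx Q hQ
      have hb := hx2 x hx
      exact ⟨zero_rowop hQ.1, lt_rowop hQ.2 (hQ.1 _ _ (by omega))⟩
    · exact ⟨z1, l1⟩
  -- positivity preserved by both runs
  have pr1 : ∀ (c : ℕ) (σ : Fin c → ℕ) (L : ℕ), PosM Q0 σ L n → PosM Q1 σ L n := by
    intro c σ L h
    apply runQ_inv (fun Q => PosM Q σ L n) p1 _ _ h
    intro x hx Q hQ
    have hb := hx1 x hx
    exact PosM_rowop _ _ _ _ _ _ (hp1 x hx) (by omega) hQ
  have pr2 : ∀ (c : ℕ) (σ : Fin c → ℕ) (L : ℕ), PosM Q1 σ L n → PosM Q2 σ L n := by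
    intro c σ L h
    apply runQ_inv (fun Q => PosM Q σ L n) p2 _ _ h
    intro x hx Q hQ
    have hb := hx2 x hx
    exact PosM_rowop _ _ _ _ _ _ (hp2 x hx) (by omega) hQ
  have f0 : PosM Q0 (fun x : Fin (2*m) => (x:ℕ)) 0 n := by
    refine PosM_congr ?_ H.full
    intro a q
    have := q.isLt
    simp only [hQ0, addCols]
    rw [if_neg (by omega), if_neg (by omega)]
  have f1 := pr1 _ _ _ f0
  -- run 1
  have hsn : ∀ k : ℕ, (Fin.snoc (fun x : Fin k => (x:ℕ)) k : Fin (k+1) → ℕ) = fun x : Fin (k+1) => (x:ℕ) := by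
    intro k
    ext x
    refine Fin.lastCases ?_ (fun x => ?_) x <;> simp
  have g1 : PosM Q1 (fun x : Fin (2*m+1) => (x:ℕ)) 0 (n-1) := by
    have hb := RunSt_base Q0 (fun x : Fin (2*m) => (x:ℕ)) (n-2) (2*m) t ht
      (PosM_mono le_rfl (by omega) f0) (by
        intro a ha
        simp only [hQ0, addCols]
        rw [if_pos trivial, if_neg (by omega)]) (by simp [hQ0, addCols])
    rw [hsn] at hb
    have := RunSt_run Q0 _ (n-2) hb (n - 2 + 1 - (2*m+1)) (2*m+1) (by omega) (by omega) p1 h1 hp1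
    have := this.toPos
    rw [show n - 2 + 1 = n - 1 by omega] at this
    exact PosM_low (by omega) this
  have g2 : PosM Q2 (fun x : Fin (2*m+1+1) => (x:ℕ)) 0 n := by
    have hb := RunSt_base Q1 (fun x : Fin (2*m+1) => (x:ℕ)) (n-1) (2*m+1) 1 one_pos
      g1 c1.1 c1.2
    rw [hsn] at hb
    have := RunSt_run Q1 _ (n-1) hb (n - 1 + 1 - (2*m+2)) (2*m+2) (by omega) (by omega) p2 h2 hp2
    have := this.toPos
    rw [show n - 1 + 1 = n by omega] at this
    exact PosM_low (by omega) this
  have g3 : PosM Q2 (Fin.snoc (fun x : Fin (2*m) => (x:ℕ)) (2*m+1) : Fin (2*m+1) → ℕ) (2*m+1) n := by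
    have hb := RunSt_base Q1 (fun x : Fin (2*m) => (x:ℕ)) (n-1) (2*m+1) 1 one_pos
      (PosM_mono le_rfl (by omega) f1) c1.1 c1.2
    have := RunSt_run Q1 _ (n-1) hb (n - 1 + 1 - (2*m+2)) (2*m+2) (by omega) (by omega) p2 h2 hp2
    have := this.toPos
    rw [show n - 1 + 1 = n by omega] at this
    exact this
  refine ⟨nn2, l2.2, z2, g2, ?_⟩
  intro c hc
  rcases Nat.lt_or_ge (2*m) c with hc' | hc'
  · rcases (show c = 2*m+1 ∨ c = 2*m+1+1 by omega) with rfl | rfl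
    · have : sel (2*m+1) = (Fin.snoc (fun x : Fin (2*m) => (x:ℕ)) (2*m+1) : Fin (2*m+1) → ℕ) := by
        ext x
        refine Fin.lastCases ?_ (fun x => ?_) x
        · simp [sel]
        · have := x.isLt
          simp [sel]; omega
      rw [this]; exact g3
    · have : sel (2*m+1+1) = (fun x : Fin (2*m+1+1) => (x:ℕ)) := by
        ext x
        have := x.isLt
        simp only [sel]
        rw [if_neg (by omega)]
      rw [this]; exact PosM_mono (by omega) le_rfl g2
  · apply pr2; apply pr1
    refine PosM_congr ?_ (H.sub c hc')
    intro a q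
    have : sel c q < 2 * m := by
      have := q.isLt
      unfold sel
      split_ifs <;> omega
    simp only [hQ0, addCols]
    rw [if_neg (by omega), if_neg (by omega)]

/-- signed partner column -/
def Qhat (Q : ℕ → ℕ → ℝ) (a y : ℕ) : ℝ := if y % 2 = 0 then Q a (y+1) else - Q a (y-1)

def Bf (n : ℕ) (Q : ℕ → ℕ → ℝ) (a b : ℕ) : ℝ := ∑ y ∈ Finset.range (2*n), Qhat Q a y * Q b y

def Bm (n : ℕ) (Q : ℕ → ℕ → ℝ) : Matrix (Fin n) (Fin n) ℝ :=
  Matrix.of fun a b => (-1)^((a:ℕ)+(b:ℕ)) * Bf n Q a b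

def top1 {n : ℕ} (G : Matrix (Fin (2*n)) (Fin (2*n)) ℝ) : Matrix (Fin n) (Fin n) ℝ :=
  Matrix.of fun p q => G ⟨(p : ℕ), by have := p.isLt; omega⟩ ⟨(q : ℕ), by have := q.isLt; omega⟩

def top2 {n : ℕ} (G : Matrix (Fin (2*n)) (Fin (2*n)) ℝ) : Matrix (Fin n) (Fin n) ℝ :=
  Matrix.of fun p q => G ⟨(p : ℕ), by have := p.isLt; omega⟩ ⟨n + (q : ℕ), by have := q.isLt; omega⟩

lemma sum_two {n : ℕ} (f : Fin (2*n) → ℝ) : ∑ r, f r =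
    ∑ r : Fin n, f ⟨(r:ℕ), by have := r.isLt; omega⟩ +
    ∑ r : Fin n, f ⟨n + (r:ℕ), by have := r.isLt; omega⟩ := by
  rw [← Fin.sum_congr' f (two_mul n).symm, Fin.sum_univ_add]
  rfl

lemma top1_mul {n : ℕ} (G : Matrix (Fin (2*n)) (Fin (2*n)) ℝ) (i : ℕ) (t : ℝ)
    (h1 : 1 ≤ i) (hi : i < n) :
    top1 (G * xMat n i t) = top1 G * transvection (⟨i-1, by omega⟩ : Fin n) ⟨i, hi⟩ t := by
  ext p q
  simp only [top1, Matrix.mul_apply, Matrix.of_apply, sum_two]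
  have : ∀ r : Fin n, xMat n i t ⟨n + (r:ℕ), by have := r.isLt; omega⟩
      ⟨(q:ℕ), by have := q.isLt; omega⟩ = 0 := by
    intro r
    have := r.isLt; have := q.isLt
    simp only [xMat, Matrix.of_apply, if_pos hi]
    rw [if_neg (by omega), if_neg (by omega), if_neg (by omega)]; simp
  simp only [this, mul_zero, Finset.sum_const_zero, add_zero]
  refine Finset.sum_congr rfl (fun r _ => ?_)
  congr 1
  have := r.isLt; have := q.isLt
  simp only [xMat, Matrix.of_apply, if_pos hi, transvection, Matrix.add_apply, Matrix.one_apply,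
    Matrix.single_apply, Fin.ext_iff]
  rw [if_neg (show ¬ ((r:ℕ) + 1 = n + i + 1 ∧ (q:ℕ) + 1 = n + i) by omega), add_zero]
  congr 1
  apply if_congr _ rfl rfl
  omega

lemma top2_mul {n : ℕ} (G : Matrix (Fin (2*n)) (Fin (2*n)) ℝ) (i : ℕ) (t : ℝ)
    (h1 : 1 ≤ i) (hi : i < n) :
    top2 (G * xMat n i t) = top2 G * transvection (⟨i, hi⟩ : Fin n) ⟨i-1, by omega⟩ (-t) := by
  ext p q
  simp only [top2, Matrix.mul_apply, Matrix.of_apply, sum_two]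
  have : ∀ r : Fin n, xMat n i t ⟨(r:ℕ), by have := r.isLt; omega⟩
      ⟨n + (q:ℕ), by have := q.isLt; omega⟩ = 0 := by
    intro r
    have := r.isLt; have := q.isLt
    simp only [xMat, Matrix.of_apply, if_pos hi]
    rw [if_neg (by omega), if_neg (by omega), if_neg (by omega)]; simp
  simp only [this, mul_zero, Finset.sum_const_zero, zero_add]
  refine Finset.sum_congr rfl (fun r _ => ?_)
  congr 1
  have := r.isLt; have := q.isLt
  simp only [xMat, Matrix.of_apply, if_pos hi, transvection, Matrix.add_apply, Matrix.one_apply,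
    Matrix.single_apply, Fin.ext_iff]
  rw [if_neg (show ¬ (n + (r:ℕ) + 1 = i ∧ n + (q:ℕ) + 1 = i + 1) by omega), zero_add]
  congr 1
  · apply if_congr _ rfl rfl
    omega
  · apply if_congr _ rfl rfl
    omega

lemma top1_mul_n {n : ℕ} (hn : 2 ≤ n) (G : Matrix (Fin (2*n)) (Fin (2*n)) ℝ) (t : ℝ) :
    top1 (G * xMat n n t) = top1 G := by
  ext p q
  simp only [top1, Matrix.mul_apply, Matrix.of_apply]
  rw [Finset.sum_eq_single ⟨(q:ℕ), by have := q.isLt; omega⟩]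
  · have := q.isLt
    simp only [xMat, Matrix.of_apply, lt_irrefl, if_false]
    rw [if_pos trivial, if_neg (by omega), if_neg (by omega)]; simp
  · intro r _ hr
    have := q.isLt
    have hr' : (r:ℕ) ≠ q := fun h => hr (Fin.ext h)
    simp only [xMat, Matrix.of_apply, lt_irrefl, if_false]
    rw [if_neg (by omega), if_neg (by omega), if_neg (by omega)]; simp
  · simp

lemma top2_mul_n {n : ℕ} (hn : 2 ≤ n) (G : Matrix (Fin (2*n)) (Fin (2*n)) ℝ) (t : ℝ) :
    top2 (G * xMat n n t) = top2 G + top1 G *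
      (single (⟨n-2, by omega⟩ : Fin n) (⟨n-1, by omega⟩ : Fin n) t -
       single (⟨n-1, by omega⟩ : Fin n) (⟨n-2, by omega⟩ : Fin n) t) := by
  have h : top2 G = top2 G * 1 := by simp
  rw [h]
  ext p q
  simp only [top2, top1, Matrix.mul_apply, Matrix.of_apply, sum_two, Matrix.add_apply]
  rw [add_comm]
  congr 1
  · refine Finset.sum_congr rfl (fun r _ => ?_)
    congr 1
    have := r.isLt; have := q.isLt
    simp only [xMat, Matrix.of_apply, lt_irrefl, if_false, Matrix.one_apply, Fin.ext_iff]
    rw [if_neg (show ¬ (n + (r:ℕ) + 1 = n - 1 ∧ n + (q:ℕ) + 1 = 2 * n) by omega),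
      if_neg (show ¬ (n + (r:ℕ) + 1 = n ∧ n + (q:ℕ) + 1 = 2 * n - 1) by omega), add_zero, add_zero]
    apply if_congr _ rfl rfl
    omega
  · refine Finset.sum_congr rfl (fun r _ => ?_)
    congr 1
    have := r.isLt; have := q.isLt
    simp only [xMat, Matrix.of_apply, lt_irrefl, if_false, Matrix.sub_apply,
      Matrix.single_apply, Fin.ext_iff]
    rw [if_neg (show ¬ ((r:ℕ) = n + (q:ℕ)) by omega), zero_add, sub_eq_add_neg]
    congr 1
    · apply if_congr _ rfl rfl
      omega
    · rw [apply_ite Neg.neg, neg_zero]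
      apply if_congr _ rfl rfl
      omega

lemma Qhat_rowop (i : ℕ) (t : ℝ) (Q : ℕ → ℕ → ℝ) (a y : ℕ) :
    Qhat (rowop i t Q) a y = if a = i then Qhat Q i y + t * Qhat Q (i+1) y else Qhat Q a y := by
  unfold Qhat rowop
  split_ifs <;> ring

lemma Bf_rowop (n i : ℕ) (t : ℝ) (Q : ℕ → ℕ → ℝ) (a b : ℕ) :
    Bf n (rowop i t Q) a b =
      (if a = i then
        (if b = i then Bf n Q i i + t * Bf n Q i (i+1) + t * (Bf n Q (i+1) i + t * Bf n Q (i+1) (i+1))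
         else Bf n Q i b + t * Bf n Q (i+1) b)
      else
        (if b = i then Bf n Q a i + t * Bf n Q a (i+1) else Bf n Q a b)) := by
  unfold Bf
  simp only [Qhat_rowop]
  unfold rowop
  split_ifs
  all_goals
    simp only [Finset.mul_sum, ← Finset.sum_add_distrib]
  all_goals
    refine Finset.sum_congr rfl (fun y _ => ?_)
    ring

lemma Bm_rowop (n i : ℕ) (h1 : 1 ≤ i) (hi : i < n) (t : ℝ) (Q : ℕ → ℕ → ℝ) :
    Bm n (rowop (i-1) t Q) = transvection (⟨i-1, by omega⟩ : Fin n) ⟨i, hi⟩ (-t) * Bm n Q *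
      transvection (⟨i, hi⟩ : Fin n) ⟨i-1, by omega⟩ (-t) := by
  obtain ⟨k, rfl⟩ : ∃ k, i = k + 1 := ⟨i-1, by omega⟩
  ext a b
  simp only [Nat.add_sub_cancel]
  by_cases hb : b = ⟨k, by omega⟩
  · subst hb
    rw [mul_transvection_apply_same]
    by_cases ha : a = ⟨k, by omega⟩
    · subst ha
      rw [transvection_mul_apply_same, transvection_mul_apply_same]
      simp only [Bm, Matrix.of_apply, Bf_rowop, if_true]
      ring
    · have ha' : (a:ℕ) ≠ k := fun h => ha (Fin.ext h)
      rw [transvection_mul_apply_of_ne _ _ _ _ ha, transvection_mul_apply_of_ne _ _ _ _ ha]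
      simp only [Bm, Matrix.of_apply, Bf_rowop, if_true, if_neg ha']
      ring
  · have hb' : (b:ℕ) ≠ k := fun h => hb (Fin.ext h)
    rw [mul_transvection_apply_of_ne _ _ _ _ hb]
    by_cases ha : a = ⟨k, by omega⟩
    · subst ha
      rw [transvection_mul_apply_same]
      simp only [Bm, Matrix.of_apply, Bf_rowop, if_true, if_neg hb']
      ring
    · have ha' : (a:ℕ) ≠ k := fun h => ha (Fin.ext h)
      rw [transvection_mul_apply_of_ne _ _ _ _ ha]
      simp only [Bm, Matrix.of_apply, Bf_rowop, if_neg ha', if_neg hb']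

lemma Bm_addCols (n m : ℕ) (hn : 2 ≤ n) (hm : m < n) (t : ℝ) (Q : ℕ → ℕ → ℝ)
    (hz : ∀ a b, 2 * m ≤ b → Q a b = 0) :
    Bm n (addCols n m t Q) = Bm n Q +
      (single (⟨n-2, by omega⟩ : Fin n) (⟨n-1, by omega⟩ : Fin n) t -
       single (⟨n-1, by omega⟩ : Fin n) (⟨n-2, by omega⟩ : Fin n) t) := by
  have key : ∀ a b : ℕ, Bf n (addCols n m t Q) a b = Bf n Q a b +
      ((if a = n-1 then 1 else 0) * (if b = n-2 then t else 0) -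
       (if a = n-2 then t else 0) * (if b = n-1 then 1 else 0)) := by
    intro a b
    have : ∀ y ∈ Finset.range (2*n), Qhat (addCols n m t Q) a y * addCols n m t Q b y =
        Qhat Q a y * Q b y + ((if y = 2*m then (if a = n-1 then 1 else 0) * (if b = n-2 then t else 0)
          else 0) + (if y = 2*m+1 then -((if a = n-2 then t else 0) * (if b = n-1 then 1 else 0))
          else 0)) := by
      intro y _
      by_cases h1 : y = 2*m
      · subst h1
        simp [Qhat, addCols, hz]
      · by_cases h2 : y = 2*m+1
        · subst h2
          have : (2*m+1) % 2 = 1 := by omega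
          simp [Qhat, addCols, hz, this]
          split_ifs <;> simp
        · have h3 : addCols n m t Q b y = Q b y := by simp [addCols, h1, h2]
          have h4 : Qhat (addCols n m t Q) a y = Qhat Q a y := by
            unfold Qhat
            split_ifs with h
            · simp only [addCols]; rw [if_neg (by omega), if_neg (by omega)]
            · simp only [addCols]; rw [if_neg (by omega), if_neg (by omega)]
          rw [h3, h4, if_neg h1, if_neg h2]; ring
    unfold Bf
    rw [Finset.sum_congr rfl this, Finset.sum_add_distrib, Finset.sum_add_distrib,
      Finset.sum_ite_eq', Finset.sum_ite_eq', if_pos (Finset.mem_range.2 (by omega)),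
      if_pos (Finset.mem_range.2 (by omega))]
    ring
  ext a b
  have e1 : (-1:ℝ)^(n-1+(n-2)) = -1 := by
    rw [Odd.neg_one_pow]; exact ⟨n-2, by omega⟩
  have e2 : (-1:ℝ)^(n-2+(n-1)) = -1 := by
    rw [Odd.neg_one_pow]; exact ⟨n-2, by omega⟩
  simp only [Bm, Matrix.of_apply, key, Matrix.add_apply, Matrix.sub_apply, Matrix.single_apply,
    Fin.ext_iff]
  rw [mul_add]
  congr 1
  by_cases h1 : (a:ℕ) = n-1 ∧ (b:ℕ) = n-2
  · rw [if_neg (show ¬ (n - 2 = (a:ℕ) ∧ n - 1 = (b:ℕ)) by omega),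
      if_pos (show n - 1 = (a:ℕ) ∧ n - 2 = (b:ℕ) by omega), if_pos h1.1, if_pos h1.2,
      if_neg (show ¬ (a:ℕ) = n - 2 by omega), h1.1, h1.2, e1]
    ring
  · by_cases h2 : (a:ℕ) = n-2 ∧ (b:ℕ) = n-1
    · rw [if_pos (show n - 2 = (a:ℕ) ∧ n - 1 = (b:ℕ) by omega),
        if_neg (show ¬ (n - 1 = (a:ℕ) ∧ n - 2 = (b:ℕ)) by omega), if_pos h2.1, if_pos h2.2,
        if_neg (show ¬ (a:ℕ) = n - 1 by omega), h2.1, h2.2, e2]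
      ring
    · rw [if_neg (show ¬ (n - 2 = (a:ℕ) ∧ n - 1 = (b:ℕ)) by omega),
        if_neg (show ¬ (n - 1 = (a:ℕ) ∧ n - 2 = (b:ℕ)) by omega)]
      split_ifs <;> first | omega | simp

def Good (n : ℕ) (G : Matrix (Fin (2*n)) (Fin (2*n)) ℝ) (Q : ℕ → ℕ → ℝ) : Prop :=
  (top1 G).det = 1 ∧ top2 G = top1 G * Bm n Q

lemma Good_rowop (n i : ℕ) (h1 : 1 ≤ i) (hi : i < n) (t : ℝ) (Q : ℕ → ℕ → ℝ)
    (G : Matrix (Fin (2*n)) (Fin (2*n)) ℝ) (H : Good n G Q) :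
    Good n (G * xMat n i t) (rowop (i-1) t Q) := by
  have hne : (⟨i-1, by omega⟩ : Fin n) ≠ ⟨i, hi⟩ := by simp; omega
  refine ⟨?_, ?_⟩
  · rw [top1_mul G i t h1 hi, Matrix.det_mul, H.1, det_transvection_of_ne _ _ hne, one_mul]
  · rw [top1_mul G i t h1 hi, top2_mul G i t h1 hi, Bm_rowop n i h1 hi, H.2]
    have : transvection (⟨i-1, by omega⟩ : Fin n) ⟨i, hi⟩ t *
        transvection (⟨i-1, by omega⟩ : Fin n) ⟨i, hi⟩ (-t) = 1 := by
      rw [transvection_mul_transvection_same _ _ hne]; simp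
    simp only [Matrix.mul_assoc]
    congr 1
    simp only [← Matrix.mul_assoc]
    rw [this, Matrix.one_mul]

lemma Good_addCols (n m : ℕ) (hn : 2 ≤ n) (hm : m < n) (t : ℝ) (Q : ℕ → ℕ → ℝ)
    (hz : ∀ a b, 2 * m ≤ b → Q a b = 0)
    (G : Matrix (Fin (2*n)) (Fin (2*n)) ℝ) (H : Good n G Q) :
    Good n (G * xMat n n t) (addCols n m t Q) := by
  refine ⟨by rw [top1_mul_n hn]; exact H.1, ?_⟩
  rw [top1_mul_n hn, top2_mul_n hn, H.2, Bm_addCols n m hn hm t Q hz, Matrix.mul_add]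

def mprod (n : ℕ) (ps : List (ℕ × ℝ)) : Matrix (Fin (2*n)) (Fin (2*n)) ℝ :=
  (ps.map (fun x => xMat n x.1 x.2)).prod

lemma Good_run (n : ℕ) (ps : List (ℕ × ℝ)) (h : ∀ x ∈ ps, 1 ≤ x.1 ∧ x.1 < n) (Q : ℕ → ℕ → ℝ)
    (G : Matrix (Fin (2*n)) (Fin (2*n)) ℝ) (H : Good n G Q) :
    Good n (G * mprod n ps) (runQ ps Q) := by
  unfold mprod runQ
  induction ps generalizing Q G with
  | nil => simpa using H
  | cons a l ih =>
    simp only [List.map_cons, List.prod_cons, List.foldl_cons, ← Matrix.mul_assoc]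
    apply ih (fun x hx => h x (by simp [hx]))
    have := h a (by simp)
    exact Good_rowop n a.1 this.1 this.2 a.2 Q G H

def blk (n m : ℕ) : List ℕ := n :: (decRun (n - 2) (2 * m + 1) ++ decRun (n - 1) (2 * m + 2))

lemma blocks (n : ℕ) (hn : 2 ≤ n) (m : ℕ) (hm : 2 * m ≤ n) (ps : List (ℕ × ℝ))
    (hps : ps.map Prod.fst = ((List.range m).map (blk n)).flatten) (hpos : ∀ x ∈ ps, 0 < x.2) :
    ∃ Q, Good n (mprod n ps) Q ∧ QInv n m Q := by
  induction m generalizing ps with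
  | zero =>
    have : ps = [] := by simpa using hps
    subst this
    refine ⟨fun _ _ => 0, ⟨?_, ?_⟩, ?_⟩
    · have : top1 (mprod n []) = 1 := by
        ext p q
        simp [top1, mprod, Matrix.one_apply, Fin.ext_iff]
      rw [this]; simp
    · have : Bm n (fun _ _ => 0) = 0 := by
        ext p q
        simp [Bm, Bf]
      rw [this]
      ext p q
      have := p.isLt
      simp [top2, mprod, Matrix.one_apply, Fin.ext_iff]; omega
    · refine ⟨by simp, by simp, by simp, ?_, ?_⟩
      · intro r _ _ _
        simp [minorQ]
      · intro c hc
        have : c = 0 := by omega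
        subst this
        intro r _ _ _
        simp [minorQ]
  | succ m ih =>
    rw [List.range_succ, List.map_append, List.flatten_append, List.map_eq_append_iff] at hps
    obtain ⟨l1, l2, rfl, h1, h2⟩ := hps
    obtain ⟨Q, hG, hI⟩ := ih (by omega) l1 h1 (fun x hx => hpos x (by simp [hx]))
    simp only [List.map_cons, List.map_nil, List.flatten_cons, List.flatten_nil, List.append_nil,
      blk] at h2
    rw [List.map_eq_cons_iff] at h2
    obtain ⟨x, l3, rfl, hx, h3⟩ := h2
    rw [List.map_eq_append_iff] at h3
    obtain ⟨p1, p2, rfl, hp1, hp2⟩ := h3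
    refine ⟨runQ p2 (runQ p1 (addCols n m x.2 Q)), ?_, ?_⟩
    · have e : mprod n (l1 ++ x :: (p1 ++ p2)) = mprod n l1 * xMat n n x.2 * mprod n p1 * mprod n p2 := by
        simp [mprod, hx, Matrix.mul_assoc]
      rw [e]
      apply Good_run
      · intro y hy
        have : y.1 ∈ decRun (n-1) (2*m+2) := by rw [← hp2]; exact List.mem_map_of_mem hy
        rw [mem_decRun] at this; omega
      apply Good_run
      · intro y hy
        have : y.1 ∈ decRun (n-2) (2*m+1) := by rw [← hp1]; exact List.mem_map_of_mem hy
        rw [mem_decRun] at this; omega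
      exact Good_addCols n m hn (by omega) _ _ hI.zero _ hG
    · exact block_inv n m (by omega) Q hI x.2 (hpos x (by simp)) p1 p2 hp1 hp2
        (fun y hy => hpos y (by simp [hy])) (fun y hy => hpos y (by simp [hy]))

lemma wordD_length (n : ℕ) (hn : 2 ≤ n) : (wordD n).length = Npar n := by
  have key : ∀ m, 2 * m ≤ n → ((((List.range m).map (blk n)).flatten).length : ℤ) =
      m * (2 * n - 2 * m - 1) := by
    intro m
    induction m with
    | zero => simp
    | succ m ih =>
      intro hm
      have h := ih (by omega)
      rw [List.range_succ, List.map_append, List.flatten_append, List.length_append]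
      push_cast
      rw [h]
      have : (((List.map (blk n) [m]).flatten.length : ℕ) : ℤ) = 2 * n - 4 * m - 3 := by
        simp [blk, decRun]
        omega
      rw [this]
      ring
  have h := key (n/2) (by omega)
  have e : wordD n = ((List.range (n/2)).map (blk n)).flatten := rfl
  rw [← e] at h
  unfold Npar
  rcases Nat.even_or_odd' n with ⟨k, hk | hk⟩
  · have h2 : n / 2 = k := by omega
    rw [h2] at h
    have : n * (n-1) = 2 * (k * (2*k-1)) := by rw [hk]; ring
    rw [this, Nat.mul_div_cancel_left _ (by norm_num)]
    zify [show 1 ≤ 2 * k by omega]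
    rw [h, hk]; push_cast; ring
  · have h2 : n / 2 = k := by omega
    rw [h2] at h
    have : n * (n-1) = 2 * (k * (2*k+1)) := by rw [hk]; simp; ring
    rw [this, Nat.mul_div_cancel_left _ (by norm_num)]
    zify
    rw [h, hk]; push_cast; ring

lemma exists_Q (n : ℕ) (hn : 2 ≤ n) (t : ℕ → ℝ) (ht : ∀ i < Npar n, 0 < t i) :
    ∃ Q, Amat n t = Bm n Q ∧ QInv n (n/2) Q := by
  obtain ⟨Q, hG, hI⟩ := blocks n hn (n/2) (by omega)
    ((List.range (Npar n)).map (fun l => ((wordD n).getD l 0, t l))) (by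
      rw [List.map_map]
      change _ = wordD n
      apply List.ext_getElem
      · simp [wordD_length n hn]
      · intro i h1 h2
        simp [h2]) (by
      intro x hx
      simp only [List.mem_map, List.mem_range] at hx
      obtain ⟨l, hl, rfl⟩ := hx
      exact ht l hl)
  refine ⟨Q, ?_, hI⟩
  have e : mprod n ((List.range (Npar n)).map (fun l => ((wordD n).getD l 0, t l))) = prodX n t := by
    simp [mprod, prodX, Function.comp_def]
  rw [e] at hG
  have e1 : X1 n t = top1 (prodX n t) := rfl
  have e2 : X2 n t = top2 (prodX n t) := rfl
  unfold Amat
  rw [e1, e2, hG.2, ← Matrix.mul_assoc, Matrix.nonsing_inv_mul _ (by rw [hG.1]; exact isUnit_one),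
    Matrix.one_mul]

def Jf (x y : ℕ) : ℝ := if x % 2 = 0 then (if y = x + 1 then -1 else 0) else (if y + 1 = x then 1 else 0)

lemma sel_add_two (c : ℕ) (x : Fin c) : sel (c+2) x.succ.succ = sel c x + 2 := by
  unfold sel
  simp only [Fin.val_succ]
  split_ifs <;> omega

lemma Jf_add_two (x y : ℕ) : Jf (x+2) (y+2) = Jf x y := by
  unfold Jf
  have : (x+2) % 2 = x % 2 := by omega
  rw [this]
  split_ifs <;> first | rfl | omega

lemma detJ (c : ℕ) : Matrix.det (Matrix.of fun x y : Fin c => Jf (sel c x) y) = 1 := by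
  induction c using Nat.twoStepInduction with
  | zero => simp
  | one => simp [Jf, sel]
  | more c ih _ =>
    have s0 : sel (c+2) 0 = 0 := by simp [sel]
    have s1 : sel (c+2) 1 = 1 := by simp [sel]
    rw [Matrix.det_succ_row_zero, Finset.sum_eq_single 1]
    · rw [Matrix.det_succ_row_zero, Finset.sum_eq_single 0]
      · have : ((Matrix.of fun x y : Fin (c+2) => Jf (sel (c+2) x) y).submatrix Fin.succ
            (Fin.succAbove 1)).submatrix Fin.succ (Fin.succAbove 0) =
            Matrix.of fun x y : Fin c => Jf (sel c x) y := by
          ext x y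
          have e : ((Fin.succAbove (1 : Fin (c+2)) y.succ : Fin (c+2)) : ℕ) = y + 2 := by
            rw [Fin.succAbove_of_le_castSucc]
            · simp
            · simp [Fin.le_def]
          simp only [Matrix.submatrix_apply, Matrix.of_apply, Fin.succAbove_zero, e, sel_add_two,
            Jf_add_two]
        rw [this, ih]
        simp [s0, s1, Jf]
      · intro b _ hb
        have hb' : (b:ℕ) ≠ 0 := fun h => hb (Fin.ext h)
        have e : ((Fin.succAbove (1 : Fin (c+2)) b : Fin (c+2)) : ℕ) = b + 1 := by
          rw [Fin.succAbove_of_le_castSucc]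
          · simp
          · simp [Fin.le_def]; omega
        simp [s1, Jf, e, hb']
      · simp
    · intro b _ hb
      have hb' : (b:ℕ) ≠ 1 := fun h => hb (Fin.ext (by simpa using h))
      simp [s0, Jf, hb']
    · simp

lemma Qhat_eq {c : ℕ} (Q : ℕ → ℕ → ℝ) (a : ℕ) (y : Fin c) :
    Qhat Q a y = ∑ x : Fin c, Q a (sel c x) * Jf (sel c x) y := by
  have hy := y.isLt
  by_cases h : (y:ℕ) % 2 = 0
  · by_cases hc : (y:ℕ) + 1 = c
    · rw [Finset.sum_eq_single y]
      · have : sel c y = y + 1 := by simp [sel, h, hc]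
        rw [this]
        have h2 : ((y:ℕ)+1) % 2 = 1 := by omega
        simp [Qhat, Jf, h, h2]
      · intro x _ hx
        have hx' : (x:ℕ) ≠ y := fun e => hx (Fin.ext e)
        have := x.isLt
        have : sel c x = x := by unfold sel; rw [if_neg (by omega)]
        rw [this]
        unfold Jf
        split_ifs <;> first | omega | simp
      · simp
    · rw [Finset.sum_eq_single ⟨(y:ℕ)+1, by omega⟩]
      · have : sel c ⟨(y:ℕ)+1, by omega⟩ = y + 1 := by
          unfold sel; rw [if_neg]; simp; omega
        rw [this]
        have h2 : ((y:ℕ)+1) % 2 = 1 := by omega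
        simp [Qhat, Jf, h, h2]
      · intro x _ hx
        have hx' : (x:ℕ) ≠ y + 1 := fun e => hx (Fin.ext e)
        have := x.isLt
        unfold sel Jf
        split_ifs <;> first | omega | simp
      · simp
  · rw [Finset.sum_eq_single ⟨(y:ℕ)-1, by omega⟩]
    · have : sel c ⟨(y:ℕ)-1, by omega⟩ = y - 1 := by
        unfold sel; rw [if_neg]; simp; omega
      rw [this]
      have h2 : ((y:ℕ)-1) % 2 = 0 := by omega
      have h3 : (y:ℕ) = y - 1 + 1 := by omega
      unfold Qhat Jf
      rw [if_neg h, if_pos h2, if_pos h3]; ring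
    · intro x _ hx
      have hx' : (x:ℕ) ≠ y - 1 := fun e => hx (Fin.ext e)
      have := x.isLt
      unfold sel Jf
      split_ifs <;> first | omega | simp
    · simp

lemma det_Bf_pos (n c : ℕ) (hc : c + 1 ≤ n) (Q : ℕ → ℕ → ℝ) (H : QInv n (n/2) Q) (r : Fin c → ℕ)
    (hr : StrictMono r) (hrn : ∀ p, r p < n) (hL : ∀ p : Fin c, (p:ℕ) + 1 = c → c ≤ r p) :
    0 < Matrix.det (Matrix.of fun p q : Fin c => Bf n Q (r p) q) := by
  have hfac : (Matrix.of fun p q : Fin c => Bf n Q (r p) q) =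
      (Matrix.of fun p x : Fin c => Q (r p) (sel c x)) *
      (Matrix.of fun x y : Fin c => Jf (sel c x) y) *
      (Matrix.of fun p q : Fin c => Q p q)ᵀ := by
    ext p q
    rw [Matrix.mul_apply]
    simp only [Matrix.of_apply, Matrix.transpose_apply, Matrix.mul_apply, ← Qhat_eq]
    unfold Bf
    rw [Fin.sum_univ_eq_sum_range (fun y => Qhat Q (r p) y * Q q y) c]
    symm
    apply Finset.sum_subset
    · intro x hx
      simp only [Finset.mem_range] at hx ⊢; omega
    · intro x _ hx
      simp only [Finset.mem_range] at hx
      rw [H.lt q x (by have := q.isLt; omega), mul_zero]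
  have hd : ∀ d, Matrix.det (Matrix.of fun p q : Fin d => Q p q) = ∏ i : Fin d, Q i i := by
    intro d
    rw [Matrix.det_of_lowerTriangular]
    · simp
    · intro i j hij
      exact H.lt _ _ (by simpa using hij)
  have hdiag : ∀ i < 2 * (n/2), 0 < Q i i := by
    have h1 := H.full (fun x => (x:ℕ)) (fun x y h => h) (fun p => by have := p.isLt; omega)
      (fun _ _ => Nat.zero_le _)
    unfold minorQ at h1
    rw [hd] at h1
    intro i hi
    refine lt_of_le_of_ne (H.nonneg i i) (fun h0 => ?_)
    have := Finset.prod_ne_zero_iff.1 h1.ne' ⟨i, hi⟩ (Finset.mem_univ _)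
    exact this h0.symm
  rw [hfac, Matrix.det_mul, Matrix.det_mul, detJ, Matrix.det_transpose, hd, mul_one]
  apply mul_pos
  · exact H.sub c (by omega) r hr hrn hL
  · exact Finset.prod_pos (fun i _ => hdiag _ (by have := i.isLt; omega))

lemma sign_lemma (c a j k n : ℕ) (hj : 1 ≤ j) (hjk : j ≤ k) (hk : k ≤ n - 1) (hn : 2 ≤ n) (hc : c = n - j)
    (ha : a = n - k - 1) :
    (-1:ℝ)^(j*k) * ((∏ p : Fin c, (-1:ℝ)^(if (p:ℕ) < a then (p:ℕ) else p + j)) *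
      ∏ q : Fin c, (-1:ℝ)^(q:ℕ)) = 1 := by
  rw [← Finset.prod_mul_distrib]
  have : ∀ p : Fin c, (-1:ℝ)^(if (p:ℕ) < a then (p:ℕ) else p + j) * (-1:ℝ)^(p:ℕ) =
      if (p:ℕ) < a then 1 else (-1:ℝ)^j := by
    intro p
    split_ifs
    · rw [← pow_add, Even.neg_one_pow ⟨_, rfl⟩]
    · rw [← pow_add, show (p:ℕ) + j + p = (p + p) + j by ring, pow_add,
        Even.neg_one_pow ⟨(p:ℕ), rfl⟩, one_mul]
  rw [Finset.prod_congr rfl (fun p _ => this p),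
    Fin.prod_univ_eq_prod_range (fun p => if p < a then 1 else (-1:ℝ)^j) c]
  have hac : c = a + (k - j + 1) := by omega
  rw [hac, Finset.prod_range_add]
  rw [Finset.prod_congr rfl (g := fun _ => (1:ℝ)) (fun x hx => by
    rw [if_pos (Finset.mem_range.1 hx)])]
  simp only [Finset.prod_const_one, one_mul, add_lt_iff_neg_left, not_lt_zero, if_false,
    Finset.prod_const, Finset.card_range]
  obtain ⟨e, rfl⟩ : ∃ e, k = j + e := ⟨k - j, by omega⟩
  rw [← pow_mul, ← pow_add, Even.neg_one_pow]
  have : j * (j + e) + j * (j + e - j + 1) = j * (j + 1) + 2 * (j * e) := by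
    rw [Nat.add_sub_cancel_left]; ring
  rw [this]
  exact (Nat.even_mul_succ_self j).add (even_two_mul _)

/-- If the parameters `t_1, …, t_N` are positive then all the minors
`M_{j,k}(A(t))` are positive. -/
theorem Mminor_pos_of_params_pos (n : ℕ) (hn : 2 ≤ n)
    (t : ℕ → ℝ) (ht : ∀ i < Npar n, 0 < t i) :
    ∀ j k : ℕ, 1 ≤ j → j ≤ k → k ≤ n - 1 → 0 < Mminor n j k (Amat n t) := by
  intro j k hj hjk hk
  obtain ⟨Q, hA, hI⟩ := exists_Q n hn t ht
  set r : Fin (n-j) → ℕ := fun p => if (p:ℕ) < n - k - 1 then (p:ℕ) else p + j with hr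
  have hdet := det_Bf_pos n (n-j) (by omega) Q hI r (by
      intro x y hxy
      have : (x:ℕ) < y := hxy
      simp only [hr]
      split_ifs <;> omega) (by
      intro p
      have := p.isLt
      simp only [hr]
      split_ifs <;> omega) (by
      intro p hp
      simp only [hr]
      split_ifs <;> omega)
  unfold Mminor
  rw [hA]
  have e : (Matrix.of fun (p q : Fin (n - j)) =>
      Bm n Q (if (p : ℕ) < n - k - 1
          then ⟨(p : ℕ), by have := p.isLt; omega⟩
          else ⟨(p : ℕ) + j, by have := p.isLt; omega⟩)
        ⟨(q : ℕ), by have := q.isLt; omega⟩) =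
      Matrix.of fun (p q : Fin (n - j)) => (-1:ℝ)^(r p) *
        (Matrix.of fun (p q : Fin (n - j)) => (-1:ℝ)^(q:ℕ) *
          (Matrix.of fun p q : Fin (n-j) => Bf n Q (r p) q) p q) p q := by
    ext p q
    simp only [Matrix.of_apply, Bm, hr]
    split_ifs <;> simp only [pow_add] <;> ring
  rw [e, Matrix.det_mul_column, Matrix.det_mul_row]
  have hs := sign_lemma (n-j) (n-k-1) j k n hj hjk hk hn rfl rfl
  have : (-1:ℝ)^(j*k) * ((∏ i, (-1:ℝ)^(r i)) * ((∏ i : Fin (n-j), (-1:ℝ)^(i:ℕ)) *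
      (Matrix.of fun p q : Fin (n-j) => Bf n Q (r p) q).det)) =
      (Matrix.of fun p q : Fin (n-j) => Bf n Q (r p) q).det := by
    rw [← mul_assoc (∏ i, (-1:ℝ)^(r i)), ← mul_assoc, hs, one_mul]
  rw [this]
  exact hdet
end
end
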